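/- arXiv:2210.08526 — 2 statements merged into one kernel-verified Lean document; each statement's English description precedes it below -/
import Mathlib

section
/- Let A_n be the random skew-symmetric matrix model with α-balanced entries. Then lim_{n→∞} P(rank(A_n) = n − 1_{n odd}) = 1; that is, the rank of A_n over the rationals equals n when n is even and n − 1 when n is odd, with probability tending to 1 as n → ∞. -/
/-!
The idea is to work modulo one large prime `p` and to follow the corank of the leading `k × k`
corner as `k` grows. All corners are cut from a single infinite array of independent entries.

Over any field, bordering an alternating matrix by one row and column changes the corank by exactly
one: it goes up if the new column is orthogonal to the kernel, and down otherwise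
(`corank_succ_of_fails`, `corank_succ_of_not_fails`). In particular the corank has the parity of the
size. If the kernel contains a nonzero vector `u`, then going up forces the new column to be
orthogonal to `u`; when `u` has at least `m` nonzero coordinates, the Littlewood–Offord bound
`prob_dot_eq_zero_le` shows that this has probability at most `1 / p + ρ ^ m`, where `ρ < 1` bounds
the nontrivial Fourier coefficients of the entries modulo `p`. Kernel vectors with fewer than `m`
nonzero coordinates are excluded up to exponentially small probability by a union bound
(`prob_bad_le`).

So away from `0` the corank performs a walk with strong downward drift. The potential
`C ^ corank`, restricted to corank at least two, satisfies a contracting recursion in expectation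
(`lintegral_pot_succ_le`), with stationary value of order `1 / p + ρ ^ m`. Choosing `p` and then `m`
large makes the probability of corank at least two eventually as small as desired
(`eventually_prob_corank_le`).

In an even size, corank at most one modulo `p` means corank zero by parity, so the integer
determinant is nonzero. This settles even `n`. For odd `n` the same fact in size `n + 1` bounds the
rational corank in size `n` by one, and parity makes it equal to one (`rank_eq_of_corank`).
-/

open MeasureTheory Filter

noncomputable section

def IsBalanced (α : ℝ) (μ : Measure ℤ) : Prop :=
  ∀ p : ℕ, p.Prime → ∀ r : ZMod p, μ {x : ℤ | (x : ZMod p) = r} ≤ ENNReal.ofReal (1 - α)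

def skewMatrix (n : ℕ) (x : Fin n × Fin n → ℤ) : Matrix (Fin n) (Fin n) ℤ :=
  Matrix.of fun i j => if i < j then x (i, j) else if j < i then -x (j, i) else 0

def matMeasure (μ : Measure ℤ) (hμ : IsProbabilityMeasure μ) (n : ℕ) :
    Measure (Fin n × Fin n → ℤ) :=
  haveI := hμ
  Measure.pi fun _ => μ

/-! ### The corank walk over a field -/

namespace SkewRank

open Matrix

section LinearAlgebra

variable {F : Type*} [Field F]

/-- The `k × k` alternating matrix built from the entries of an infinite array `x` above the
diagonal. For different `k` these matrices are nested, which gives the corank process below. -/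
def skewF (k : ℕ) (x : ℕ × ℕ → F) : Matrix (Fin k) (Fin k) F :=
  Matrix.of fun i j => if i < j then x (i, j) else if j < i then -x (j, i) else 0

/-- The kernel of `skewF k x`. -/
def kerS (k : ℕ) (x : ℕ × ℕ → F) : Submodule F (Fin k → F) :=
  LinearMap.ker (skewF k x).mulVecLin

/-- The corank of `skewF k x`. -/
def corank (k : ℕ) (x : ℕ × ℕ → F) : ℕ := Module.finrank F (kerS k x)

/-- The column added above the new diagonal entry when passing from size `k` to `k + 1`. -/
def newCol (k : ℕ) (x : ℕ × ℕ → F) : Fin k → F := fun i => x (i, k)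

/-- The new column is orthogonal to the kernel; equivalently, it lies in the column space. -/
def Fails (k : ℕ) (x : ℕ × ℕ → F) : Prop := ∀ u ∈ kerS k x, newCol k x ⬝ᵥ u = 0

lemma mem_kerS {k : ℕ} {x : ℕ × ℕ → F} {u : Fin k → F} :
    u ∈ kerS k x ↔ skewF k x *ᵥ u = 0 := by
  simp [kerS]

lemma skewF_transpose (k : ℕ) (x : ℕ × ℕ → F) : (skewF k x)ᵀ = -skewF k x := by
  ext i j
  simp only [skewF, transpose_apply, of_apply]
  rcases lt_trichotomy i j with h | h | h
  · simp [h, h.not_gt]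
  · simp [h]
  · simp [h, h.not_gt]

lemma dot_skew (k : ℕ) (x : ℕ × ℕ → F) (u w : Fin k → F) :
    u ⬝ᵥ (skewF k x *ᵥ w) = -((skewF k x *ᵥ u) ⬝ᵥ w) := by
  rw [dotProduct_mulVec, ← mulVec_transpose, skewF_transpose, neg_mulVec, neg_dotProduct]

/-- The quadratic form vanishes in every characteristic because the diagonal is zero. -/
lemma dot_skew_self (k : ℕ) (x : ℕ × ℕ → F) (u : Fin k → F) :
    u ⬝ᵥ (skewF k x *ᵥ u) = 0 := by
  simp only [dotProduct, mulVec, Finset.mul_sum]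
  rw [← Finset.sum_product']
  refine Finset.sum_involution (fun a _ => (a.2, a.1)) ?_ ?_ ?_ ?_
  · rintro ⟨i, j⟩ -
    simp only [skewF, of_apply]
    rcases lt_trichotomy i j with h | h | h
    · simp [h, h.not_gt]; ring
    · simp [h]
    · simp [h, h.not_gt]; ring
  · rintro ⟨i, j⟩ - hne heq
    apply hne
    have : i = j := by simpa using (congrArg Prod.snd heq)
    simp [skewF, this]
  · simp
  · simp

lemma skewF_succ_mulVec_castSucc (k : ℕ) (x : ℕ × ℕ → F) (y : Fin (k + 1) → F) (i : Fin k) :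
    (skewF (k + 1) x *ᵥ y) i.castSucc
      = (skewF k x *ᵥ (Fin.init y)) i + newCol k x i * y (Fin.last k) := by
  simp [mulVec, dotProduct, Fin.sum_univ_castSucc, skewF, newCol, Fin.init, Fin.castSucc_lt_last]

lemma skewF_succ_mulVec_last (k : ℕ) (x : ℕ × ℕ → F) (y : Fin (k + 1) → F) :
    (skewF (k + 1) x *ᵥ y) (Fin.last k) = -(newCol k x ⬝ᵥ (Fin.init y)) := by
  simp [mulVec, dotProduct, Fin.sum_univ_castSucc, skewF, newCol, Fin.init, Fin.castSucc_lt_last,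
    (Fin.castSucc_lt_last _).not_gt]

lemma mem_kerS_succ {k : ℕ} {x : ℕ × ℕ → F} {y : Fin (k + 1) → F} :
    y ∈ kerS (k + 1) x ↔
      (skewF k x *ᵥ (Fin.init y) + y (Fin.last k) • newCol k x = 0) ∧
        newCol k x ⬝ᵥ (Fin.init y) = 0 := by
  rw [mem_kerS]
  constructor
  · intro h
    refine ⟨?_, ?_⟩
    · ext i
      have := congrFun h i.castSucc
      rw [skewF_succ_mulVec_castSucc] at this
      simpa [mul_comm] using this
    · have := congrFun h (Fin.last k)
      rw [skewF_succ_mulVec_last] at this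
      simpa using this
  · rintro ⟨h1, h2⟩
    ext i
    refine Fin.lastCases ?_ (fun i => ?_) i
    · rw [skewF_succ_mulVec_last, h2]; simp
    · rw [skewF_succ_mulVec_castSucc]
      simpa [mul_comm] using congrFun h1 i

/-- A vector orthogonal to the kernel is in the column space. -/
lemma exists_of_fails {k : ℕ} {x : ℕ × ℕ → F} (h : Fails k x) :
    ∃ z, skewF k x *ᵥ z = newCol k x := by
  have hmem : dotProductBilin F F (newCol k x)
      ∈ LinearMap.range (skewF k x).mulVecLin.dualMap := by
    rw [LinearMap.range_dualMap_eq_dualAnnihilator_ker, Submodule.mem_dualAnnihilator]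
    intro u hu
    exact h u hu
  obtain ⟨ψ, hψ⟩ := hmem
  refine ⟨-(fun i => ψ (Pi.single i 1)), ?_⟩
  have hψ' : ∀ w, ψ w = (fun i => ψ (Pi.single i 1)) ⬝ᵥ w := by
    intro w
    conv_lhs => rw [← Finset.univ_sum_single w]
    rw [map_sum, dotProduct]
    refine Finset.sum_congr rfl fun i _ => ?_
    have : (Pi.single i (w i) : Fin k → F) = w i • Pi.single i 1 := by
      rw [← Pi.single_smul]; simp
    rw [this, map_smul, smul_eq_mul, mul_comm]
  refine dotProduct_eq _ _ fun w => ?_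
  have h2 := LinearMap.congr_fun hψ w
  simp only [LinearMap.dualMap_apply, mulVecLin_apply] at h2
  rw [hψ', dot_skew] at h2
  rw [mulVec_neg, neg_dotProduct, h2]
  rfl

/-- If the new column lies in the column space, the corank increases by one. -/
lemma corank_succ_of_fails {k : ℕ} {x : ℕ × ℕ → F} (h : Fails k x) :
    corank (k + 1) x = corank k x + 1 := by
  obtain ⟨z, hz⟩ := exists_of_fails h
  have key : ∀ y, y ∈ kerS (k + 1) x ↔ Fin.init y + y (Fin.last k) • z ∈ kerS k x := by
    intro y
    rw [mem_kerS_succ, mem_kerS, mulVec_add, mulVec_smul, hz]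
    refine ⟨fun h => h.1, fun hh => ⟨hh, ?_⟩⟩
    have h1 : skewF k x *ᵥ (Fin.init y) = -(y (Fin.last k) • newCol k x) := by
      rwa [← eq_neg_iff_add_eq_zero] at hh
    have h3 : newCol k x ⬝ᵥ z = 0 := by
      rw [← hz, dotProduct_comm, dot_skew_self]
    have h2 := dot_skew k x z (Fin.init y)
    rw [hz, h1, dotProduct_neg, dotProduct_smul, dotProduct_comm z, h3] at h2
    simpa using h2.symm
  let e : kerS (k + 1) x ≃ₗ[F] kerS k x × F :=
    { toFun := fun y => (⟨Fin.init y.1 + y.1 (Fin.last k) • z, (key _).1 y.2⟩, y.1 (Fin.last k))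
      map_add' := by
        intro a b
        ext i
        · simp [Fin.init]; ring
        · simp
      map_smul' := by
        intro c a
        ext i
        · simp [Fin.init]; ring
        · simp
      invFun := fun q => ⟨Fin.snoc (q.1.1 - q.2 • z) q.2, (key _).2 (by simp)⟩
      left_inv := by
        rintro ⟨y, hy⟩
        ext i
        refine Fin.lastCases ?_ (fun i => ?_) i <;> simp [Fin.init]
      right_inv := by
        rintro ⟨⟨w, hw⟩, t⟩
        ext i <;> simp }
  have := e.finrank_eq
  rw [Module.finrank_prod, Module.finrank_self] at this
  exact this

/-- If the new column lies outside the column space, the corank drops by one. -/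
lemma corank_succ_of_not_fails {k : ℕ} {x : ℕ × ℕ → F} (h : ¬ Fails k x) :
    corank (k + 1) x + 1 = corank k x := by
  have h' : ∃ u ∈ kerS k x, newCol k x ⬝ᵥ u ≠ 0 := by
    simpa [Fails] using h
  obtain ⟨u, hu, huv⟩ := h'
  let φ : Module.Dual F (kerS k x) := (dotProductBilin F F (newCol k x)).domRestrict _
  have hφ : φ ≠ 0 := by
    intro h0
    exact huv (LinearMap.congr_fun h0 ⟨u, hu⟩)
  have hlast : ∀ y ∈ kerS (k + 1) x, y (Fin.last k) = 0 := by
    intro y hy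
    obtain ⟨h1, -⟩ := mem_kerS_succ.1 hy
    have h2 := congrArg (fun w => u ⬝ᵥ w) h1
    simp only [dotProduct_add, dot_skew, mem_kerS.1 hu, dotProduct_smul, zero_dotProduct,
      neg_zero, zero_add, dotProduct_zero, smul_eq_mul] at h2
    rcases mul_eq_zero.1 h2 with h3 | h3
    · exact h3
    · exact absurd (by rwa [dotProduct_comm] at h3) huv
  let e : kerS (k + 1) x ≃ₗ[F] LinearMap.ker φ :=
    { toFun := fun y => ⟨⟨Fin.init y.1, by
          have h1 := (mem_kerS_succ.1 y.2).1
          rw [hlast _ y.2] at h1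
          rw [mem_kerS]; simpa using h1⟩, (mem_kerS_succ.1 y.2).2⟩
      map_add' := by intro a b; rfl
      map_smul' := by intro c a; rfl
      invFun := fun q => ⟨Fin.snoc q.1.1 0, mem_kerS_succ.2 (by
        refine ⟨?_, ?_⟩
        · simpa using mem_kerS.1 q.1.2
        · rw [Fin.init_snoc]; exact LinearMap.mem_ker.1 q.2)⟩
      left_inv := by
        rintro ⟨y, hy⟩
        ext i
        refine Fin.lastCases ?_ (fun i => ?_) i
        · simp [hlast y hy]
        · simp [Fin.init]
      right_inv := by
        rintro ⟨⟨w, hw⟩, t⟩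
        ext i; simp }
  have := e.finrank_eq
  have h2 := Module.Dual.finrank_ker_add_one_of_ne_zero hφ
  rw [corank, this, h2, corank]

lemma corank_zero (x : ℕ × ℕ → F) : corank 0 x = 0 := by
  exact Nat.le_zero.1 (by simpa [corank] using Submodule.finrank_le (kerS 0 x))

lemma corank_le (k : ℕ) (x : ℕ × ℕ → F) : corank k x ≤ k := by
  simpa [corank] using Submodule.finrank_le (kerS k x)

lemma corank_parity (k : ℕ) (x : ℕ × ℕ → F) : corank k x % 2 = k % 2 := by
  induction k with
  | zero => simp [corank_zero]
  | succ k ih =>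
    by_cases h : Fails k x
    · have := corank_succ_of_fails h; omega
    · have := corank_succ_of_not_fails h; omega

lemma rank_add_corank (k : ℕ) (x : ℕ × ℕ → F) : (skewF k x).rank + corank k x = k := by
  have := LinearMap.finrank_range_add_finrank_ker (skewF k x).mulVecLin
  rw [Module.finrank_fin_fun] at this
  exact this

lemma corank_eq_zero_iff (k : ℕ) (x : ℕ × ℕ → F) : corank k x = 0 ↔ (skewF k x).det ≠ 0 := by
  rw [corank, Submodule.finrank_eq_zero, kerS, ← isUnit_iff_ne_zero, ← isUnit_iff_isUnit_det,
    ← mulVec_injective_iff_isUnit]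
  exact LinearMap.ker_eq_bot

lemma corank_succ_le (k : ℕ) (x : ℕ × ℕ → F) : corank (k + 1) x ≤ corank k x + 1 := by
  by_cases h : Fails k x
  · exact (corank_succ_of_fails h).le
  · have := corank_succ_of_not_fails h; omega

lemma corank_le_succ (k : ℕ) (x : ℕ × ℕ → F) : corank k x ≤ corank (k + 1) x + 1 := by
  by_cases h : Fails k x
  · have := corank_succ_of_fails h; omega
  · have := corank_succ_of_not_fails h; omega

end LinearAlgebra
end SkewRank

/-! ### Conditioning on finitely many entries -/

namespace SkewRank

open Matrix ProbabilityTheory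
open scoped ENNReal NNReal

section Independence

variable {Ω : Type*} [MeasurableSpace Ω] {P : Measure Ω}
  {F : Type*} [Field F] [Fintype F] [MeasurableSpace F] [MeasurableSingletonClass F]

/-- Conditioning on finitely many entries: `g` and the first argument of `H` see only the entries
in `T`, the second argument of `H` sees only the entries in the disjoint set `U`. If `H x` has
probability at most `δ` for every fixed `x` with `g x ≠ 0`, then restricting the integral of `g`
to the event `H` costs a factor `δ`. -/
lemma lintegral_indep {ξ : ℕ × ℕ → Ω → F} (hξ : iIndepFun ξ P) (hm : ∀ c, Measurable (ξ c))
    (T U : Finset (ℕ × ℕ)) (hTU : Disjoint T U) (g : (ℕ × ℕ → F) → ℝ≥0∞)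
    (hg : ∀ x y, (∀ c ∈ T, x c = y c) → g x = g y)
    (H : (ℕ × ℕ → F) → (ℕ × ℕ → F) → Prop)
    (hH : ∀ x x' y y', (∀ c ∈ T, x c = x' c) → (∀ c ∈ U, y c = y' c) → H x y → H x' y')
    (δ : ℝ≥0∞) (hδ : ∀ x, g x ≠ 0 → P {ω | H x (fun c => ξ c ω)} ≤ δ) :
    ∫⁻ ω, {ω | H (fun c => ξ c ω) (fun c => ξ c ω)}.indicator (fun ω => g (fun c => ξ c ω)) ω ∂P
      ≤ δ * ∫⁻ ω, g (fun c => ξ c ω) ∂P := by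
  classical
  let ext : (T → F) → (ℕ × ℕ → F) := fun z c => if h : c ∈ T then z ⟨c, h⟩ else 0
  let Z : Ω → (T → F) := fun ω c => ξ c ω
  let Y : Ω → (U → F) := fun ω c => ξ c ω
  have hZ : Measurable Z := measurable_pi_lambda _ fun c => hm c
  have hY : Measurable Y := measurable_pi_lambda _ fun c => hm c
  have hind : IndepFun Z Y P := hξ.indepFun_finset T U hTU hm
  have hext : ∀ ω, ∀ c ∈ T, (fun c => ξ c ω) c = ext (Z ω) c := by
    intro ω c hc
    simp [ext, Z, hc]
  let B : (T → F) → Set Ω := fun z => {ω | H (ext z) (fun c => ξ c ω)}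
  have hB : ∀ z, ∃ V : Set (U → F), B z = Y ⁻¹' V := by
    intro z
    refine ⟨Y '' B z, ?_⟩
    ext ω
    refine ⟨fun h => ⟨ω, h, rfl⟩, ?_⟩
    rintro ⟨ω', h, h'⟩
    refine hH _ _ _ _ (fun _ _ => rfl) (fun c hc => ?_) h
    exact congrFun h' ⟨c, hc⟩
  have hBm : ∀ z, MeasurableSet (B z) := by
    intro z
    obtain ⟨V, hV⟩ := hB z
    rw [hV]
    exact hY V.toFinite.measurableSet
  have hZm : ∀ z, MeasurableSet (Z ⁻¹' {z}) := fun z => hZ (measurableSet_singleton z)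
  have e1 : ∀ ω, {ω | H (fun c => ξ c ω) (fun c => ξ c ω)}.indicator
      (fun ω => g (fun c => ξ c ω)) ω
      = ∑ z, (Z ⁻¹' {z} ∩ B z).indicator (fun _ => g (ext z)) ω := by
    intro ω
    rw [Finset.sum_eq_single (Z ω)]
    · by_cases h : H (fun c => ξ c ω) (fun c => ξ c ω)
      · rw [Set.indicator_of_mem (by exact h), Set.indicator_of_mem, hg _ _ (hext ω)]
        exact ⟨rfl, hH _ _ _ _ (hext ω) (fun _ _ => rfl) h⟩
      · rw [Set.indicator_of_notMem (by exact h), Set.indicator_of_notMem]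
        rintro ⟨-, h2⟩
        exact h (hH _ _ _ _ (fun c hc => (hext ω c hc).symm) (fun _ _ => rfl) h2)
    · intro z _ hz
      rw [Set.indicator_of_notMem]
      rintro ⟨h1, -⟩
      exact hz h1.symm
    · simp
  have e2 : ∀ ω, g (fun c => ξ c ω) = ∑ z, (Z ⁻¹' {z}).indicator (fun _ => g (ext z)) ω := by
    intro ω
    rw [Finset.sum_eq_single (Z ω)]
    · rw [Set.indicator_of_mem (by rfl), hg _ _ (hext ω)]
    · intro z _ hz
      rw [Set.indicator_of_notMem]
      intro h1
      exact hz h1.symm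
    · simp
  simp_rw [e1]
  rw [lintegral_congr e2, lintegral_finsetSum _ (fun z _ =>
      measurable_const.indicator ((hZm z).inter (hBm z))),
    lintegral_finsetSum _ (fun z _ => measurable_const.indicator (hZm z)), Finset.mul_sum]
  refine Finset.sum_le_sum fun z _ => ?_
  rw [lintegral_indicator_const ((hZm z).inter (hBm z)), lintegral_indicator_const (hZm z)]
  by_cases h0 : g (ext z) = 0
  · simp [h0]
  obtain ⟨V, hV⟩ := hB z
  have h3 : P (Z ⁻¹' {z} ∩ B z) = P (Z ⁻¹' {z}) * P (B z) := by
    rw [hV]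
    exact hind.measure_inter_preimage_eq_mul _ _ (measurableSet_singleton z)
      V.toFinite.measurableSet
  rw [h3]
  calc g (ext z) * (P (Z ⁻¹' {z}) * P (B z)) ≤ g (ext z) * (P (Z ⁻¹' {z}) * δ) := by
        gcongr; exact hδ _ h0
    _ = δ * (g (ext z) * P (Z ⁻¹' {z})) := by ring

end Independence

/-! ### A Littlewood–Offord bound modulo a prime -/

section Fourier

variable {p : ℕ} [Fact p.Prime]

/-- A non-degenerate law on `ZMod p` has all nontrivial Fourier coefficients bounded away from
`1`: a mean of unit complex numbers has modulus one only if they almost surely agree. -/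
lemma exists_fourier_gap (ν : Measure (ZMod p)) [IsProbabilityMeasure ν]
    (hν : ∀ r, ν {r} < 1) :
    ∃ ρ : ℝ, 0 ≤ ρ ∧ ρ < 1 ∧ ∀ a : ZMod p, a ≠ 0 →
      ‖∫ r, ZMod.stdAddChar (a * r) ∂ν‖ ≤ ρ := by
  classical
  have h1 : ∀ a : ZMod p, a ≠ 0 → ‖∫ r, ZMod.stdAddChar (a * r) ∂ν‖ < 1 := by
    intro a ha
    have h := ae_eq_const_or_norm_integral_lt_of_norm_le_const (μ := ν) (C := 1)
      (f := fun r : ZMod p => ZMod.stdAddChar (a * r)) (by simp)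
    rcases h with h | h
    · exfalso
      set c := ⨍ r, ZMod.stdAddChar (a * r) ∂ν with hc
      have hex : ∃ r, ZMod.stdAddChar (a * r) = c := by
        obtain ⟨r, hr⟩ := h.exists
        exact ⟨r, hr⟩
      obtain ⟨r, hr⟩ := hex
      have h2 : ∀ᵐ s ∂ν, s ∈ ({r} : Set (ZMod p)) := by
        filter_upwards [h] with s hs
        have h3 : ZMod.stdAddChar (a * s) = ZMod.stdAddChar (a * r) := by
          rw [hr]; exact hs
        exact mul_left_cancel₀ ha (ZMod.injective_stdAddChar h3)
      exact (hν r).ne ((mem_ae_iff_prob_eq_one (measurableSet_singleton r)).1 h2)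
    · simpa using h
  let s : Finset (ZMod p) := Finset.univ.filter (· ≠ 0)
  have hs : s.Nonempty := ⟨1, by simp [s]⟩
  refine ⟨s.sup' hs fun a => ‖∫ r, ZMod.stdAddChar (a * r) ∂ν‖, ?_, ?_, ?_⟩
  · exact (norm_nonneg _).trans
      (Finset.le_sup' (fun a => ‖∫ r, ZMod.stdAddChar (a * r) ∂ν‖) (b := 1) (by simp [s]))
  · rw [Finset.sup'_lt_iff]
    intro a ha
    exact h1 a (by simpa [s] using ha)
  · intro a ha
    exact Finset.le_sup' (fun a => ‖∫ r, ZMod.stdAddChar (a * r) ∂ν‖) (by simp [s, ha])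

variable {Ω : Type*} [MeasurableSpace Ω] {P : Measure Ω} [IsProbabilityMeasure P]

/-- A Littlewood–Offord bound modulo `p`: a linear combination of independent variables with
many nonzero coefficients vanishes with probability little more than `1 / p`. -/
lemma prob_dot_eq_zero_le {ι : Type*} [Fintype ι] {X : ι → Ω → ZMod p} (hX : iIndepFun X P)
    (hm : ∀ i, Measurable (X i)) {ρ : ℝ} (hρ0 : 0 ≤ ρ)
    (hρ : ∀ i, ∀ a : ZMod p, a ≠ 0 → ‖∫ ω, ZMod.stdAddChar (a * X i ω) ∂P‖ ≤ ρ)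
    (u : ι → ZMod p) :
    P.real {ω | ∑ i, X i ω * u i = 0} ≤ 1 / p + ρ ^ (Finset.univ.filter (u · ≠ 0)).card := by
  classical
  have hp0 : (0 : ℝ) < p := by exact_mod_cast (Fact.out : p.Prime).pos
  have hpc : (p : ℂ) ≠ 0 := by exact_mod_cast hp0.ne'
  set m := (Finset.univ.filter (u · ≠ 0)).card with hmdef
  have hmS : Measurable fun ω => ∑ i, X i ω * u i := by
    have : Measurable fun y : ι → ZMod p => ∑ i, y i * u i := .of_discrete
    exact this.comp (measurable_pi_lambda _ hm)
  have hE : MeasurableSet {ω | ∑ i, X i ω * u i = 0} := hmS (measurableSet_singleton 0)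
  have hfm : ∀ f : ZMod p → ℂ, Measurable f := fun f => .of_discrete
  -- Fourier inversion for the indicator of `{0}`
  have e1 : ∀ ω, {ω | ∑ i, X i ω * u i = 0}.indicator (fun _ => (1 : ℂ)) ω
      = ∑ k : ZMod p, (p : ℂ)⁻¹ * ∏ i, ZMod.stdAddChar ((k * u i) * X i ω) := by
    intro ω
    have h := AddChar.sum_mulShift (∑ i, X i ω * u i) (ZMod.isPrimitive_stdAddChar p)
    have h2 : ∀ k : ZMod p, ∏ i, ZMod.stdAddChar ((k * u i) * X i ω)
        = ZMod.stdAddChar (k * ∑ i, X i ω * u i) := by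
      intro k
      have h3 : ∀ f : ι → ZMod p, ZMod.stdAddChar (∑ i, f i) = ∏ i, ZMod.stdAddChar (f i) :=
        fun f => map_prod (ZMod.stdAddChar (N := p)).toMonoidHom
          (fun i => Multiplicative.ofAdd (f i)) Finset.univ
      rw [Finset.mul_sum, h3]
      refine Finset.prod_congr rfl fun i _ => ?_
      congr 1; ring
    simp_rw [h2, ← Finset.mul_sum, h]
    by_cases h0 : ∑ i, X i ω * u i = 0
    · simp [h0, ZMod.card, hpc]
    · simp [h0]
  have e2 : ((P.real {ω | ∑ i, X i ω * u i = 0} : ℝ) : ℂ)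
      = ∑ k : ZMod p, (p : ℂ)⁻¹ * ∏ i, ∫ ω, ZMod.stdAddChar ((k * u i) * X i ω) ∂P := by
    have h3 : ∫ ω, {ω | ∑ i, X i ω * u i = 0}.indicator (fun _ => (1 : ℂ)) ω ∂P
        = ((P.real {ω | ∑ i, X i ω * u i = 0} : ℝ) : ℂ) := by
      rw [integral_indicator_const _ hE]; simp
    rw [← h3, integral_congr_ae (ae_of_all _ e1), integral_finsetSum]
    · refine Finset.sum_congr rfl fun k _ => ?_
      rw [integral_const_mul]
      congr 1
      exact hX.integral_fun_prod_comp (f := fun i y => ZMod.stdAddChar ((k * u i) * y))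
        (fun i => (hm i).aemeasurable) (fun i => (hfm _).aestronglyMeasurable)
    · intro k _
      have hmeas : Measurable fun ω => (p : ℂ)⁻¹ * ∏ i, ZMod.stdAddChar ((k * u i) * X i ω) := by
        have : Measurable fun y : ι → ZMod p =>
          (p : ℂ)⁻¹ * ∏ i, ZMod.stdAddChar ((k * u i) * y i) := .of_discrete
        exact this.comp (measurable_pi_lambda _ hm)
      refine Integrable.of_bound hmeas.aestronglyMeasurable (‖(p : ℂ)⁻¹‖) (ae_of_all _ fun ω => ?_)
      rw [norm_mul, norm_prod]
      simp
  have hle : ∀ k i, ‖∫ ω, ZMod.stdAddChar ((k * u i) * X i ω) ∂P‖ ≤ 1 := by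
    intro k i
    refine (norm_integral_le_of_norm_le_const (C := 1) (ae_of_all _ fun ω => by simp)).trans ?_
    simp
  have hk : ∀ k : ZMod p, k ≠ 0 →
      ∏ i, ‖∫ ω, ZMod.stdAddChar ((k * u i) * X i ω) ∂P‖ ≤ ρ ^ m := by
    intro k hk
    rw [← Finset.prod_filter_mul_prod_filter_not Finset.univ (u · ≠ 0)]
    have a1 : ∏ i ∈ Finset.univ.filter (u · ≠ 0),
        ‖∫ ω, ZMod.stdAddChar ((k * u i) * X i ω) ∂P‖ ≤ ρ ^ m := by
      rw [hmdef, ← Finset.prod_const]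
      refine Finset.prod_le_prod (fun _ _ => norm_nonneg _) fun i hi => ?_
      exact hρ i _ (mul_ne_zero hk (by simpa using hi))
    have a2 : ∏ i ∈ Finset.univ.filter (¬ u · ≠ 0),
        ‖∫ ω, ZMod.stdAddChar ((k * u i) * X i ω) ∂P‖ ≤ 1 :=
      Finset.prod_le_one (fun _ _ => norm_nonneg _) fun i _ => hle k i
    calc _ ≤ ρ ^ m * 1 := by
          refine mul_le_mul a1 a2 (Finset.prod_nonneg fun _ _ => norm_nonneg _) (by positivity)
      _ = ρ ^ m := mul_one _
  have e3 : P.real {ω | ∑ i, X i ω * u i = 0}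
      ≤ ∑ k : ZMod p, (p : ℝ)⁻¹ * ∏ i, ‖∫ ω, ZMod.stdAddChar ((k * u i) * X i ω) ∂P‖ := by
    have h4 := congrArg norm e2
    rw [Complex.norm_real, Real.norm_of_nonneg measureReal_nonneg] at h4
    rw [h4]
    refine (norm_sum_le _ _).trans (le_of_eq ?_)
    refine Finset.sum_congr rfl fun k _ => ?_
    rw [norm_mul, norm_prod]; simp
  refine e3.trans ?_
  rw [← Finset.mul_sum, ← Finset.add_sum_erase _ _ (Finset.mem_univ (0 : ZMod p)), mul_add]
  refine add_le_add ?_ ?_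
  · rw [one_div]
    refine mul_le_of_le_one_right (by positivity) ?_
    exact Finset.prod_le_one (fun _ _ => norm_nonneg _) fun i _ => hle 0 i
  · have h5 : ∑ k ∈ Finset.univ.erase (0 : ZMod p),
        ∏ i, ‖∫ ω, ZMod.stdAddChar ((k * u i) * X i ω) ∂P‖ ≤ p * ρ ^ m := by
      refine (Finset.sum_le_card_nsmul _ _ (ρ ^ m) fun k hk' => hk k (by simpa using hk')).trans ?_
      rw [nsmul_eq_mul]
      gcongr
      refine (Finset.card_le_univ _).trans ?_
      rw [ZMod.card]
    calc (p : ℝ)⁻¹ * _ ≤ (p : ℝ)⁻¹ * (p * ρ ^ m) := by gcongr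
      _ = ρ ^ m := by field_simp

end Fourier
end SkewRank

/-! ### Sparse kernel vectors -/

namespace SkewRank

open Matrix ProbabilityTheory
open scoped ENNReal NNReal

section SparseKernel

variable {F : Type*} [Field F]

/-- The number of nonzero coordinates of a vector. -/
def supp {k : ℕ} (u : Fin k → F) : ℕ := by
  classical exact (Finset.univ.filter (u · ≠ 0)).card

lemma supp_eq [DecidableEq F] {k : ℕ} (u : Fin k → F) :
    supp u = (Finset.univ.filter (u · ≠ 0)).card := by
  unfold supp
  congr

lemma skewF_entry_congr {k : ℕ} {x y : ℕ × ℕ → F} {i j : Fin k}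
    (h1 : i < j → x (i, j) = y (i, j)) (h2 : j < i → x (j, i) = y (j, i)) :
    skewF k x i j = skewF k y i j := by
  simp only [skewF, of_apply]
  split_ifs with h h'
  · exact h1 h
  · rw [h2 h']
  · rfl

lemma skewF_row_congr {k : ℕ} {x y : ℕ × ℕ → F} {u : Fin k → F} {i : Fin k}
    (h : ∀ j, u j ≠ 0 → skewF k x i j = skewF k y i j) :
    (skewF k x *ᵥ u) i = (skewF k y *ᵥ u) i := by
  simp only [mulVec, dotProduct]
  refine Finset.sum_congr rfl fun j _ => ?_
  by_cases hj : u j = 0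
  · simp [hj]
  · rw [h j hj]

lemma skewF_congr {k : ℕ} {x y : ℕ × ℕ → F}
    (h : ∀ c ∈ Finset.range k ×ˢ Finset.range k, x c = y c) : skewF k x = skewF k y := by
  ext i j
  refine skewF_entry_congr (fun _ => h _ ?_) (fun _ => h _ ?_) <;> simp

lemma sum_pow_supp [Fintype F] (k : ℕ) (l : ℝ) (hl : 0 ≤ l) :
    ∑ u : Fin k → F, l ^ supp u ≤ (1 + Fintype.card F * l) ^ k := by
  classical
  have h1 : ∀ u : Fin k → F, l ^ supp u = ∏ i, if u i ≠ 0 then l else 1 := by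
    intro u
    rw [Finset.prod_ite, Finset.prod_const, Finset.prod_const_one, mul_one]
    unfold supp
    congr
  have h2 : ∏ _i : Fin k, ∑ a : F, (if a ≠ 0 then l else 1)
      = ∑ u : Fin k → F, ∏ i, if u i ≠ 0 then l else 1 := by
    rw [Finset.prod_univ_sum, Fintype.piFinset_univ]
  simp_rw [h1]
  rw [← h2, Finset.prod_const, Finset.card_univ, Fintype.card_fin]
  have h3 : ∑ a : F, (if a ≠ 0 then l else 1) ≤ ∑ a : F, (l + if a = 0 then 1 else 0) := by
    refine Finset.sum_le_sum fun a _ => ?_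
    by_cases ha : a = 0 <;> simp [ha, hl]
  have h4 : ∑ a : F, (l + if a = 0 then 1 else 0) = 1 + Fintype.card F * l := by
    rw [Finset.sum_add_distrib]; simp [add_comm]
  rw [h4] at h3
  exact pow_le_pow_left₀ (Finset.sum_nonneg fun a _ => by split_ifs <;> positivity) h3 k

variable {Ω : Type*} [MeasurableSpace Ω] {P : Measure Ω} [IsProbabilityMeasure P]
  [Fintype F] [MeasurableSpace F] [MeasurableSingletonClass F]

/-- A function of finitely many entries is measurable, as `F` is finite. -/
lemma measurable_of_dep {ξ : ℕ × ℕ → Ω → F} (hm : ∀ c, Measurable (ξ c))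
    (T : Finset (ℕ × ℕ)) (g : (ℕ × ℕ → F) → ℝ≥0∞)
    (hg : ∀ x y, (∀ c ∈ T, x c = y c) → g x = g y) :
    Measurable fun ω => g (fun c => ξ c ω) := by
  classical
  have h1 : Measurable fun z : T → F => g (fun c => if h : c ∈ T then z ⟨c, h⟩ else 0) :=
    .of_discrete
  have h2 : Measurable fun ω => fun c : T => ξ c ω := measurable_pi_lambda _ fun c => hm c
  have h3 := h1.comp h2
  convert h3 using 2 with ω
  apply hg
  intro c hc
  simp [hc]

/-- For a fixed nonzero `u`, each row `i` outside the support of `u` imposes a condition on the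
entry in position `{i, j₀}`, where `u j₀ ≠ 0`; these entries are distinct, and none of them enters
the condition of another such row. -/
lemma prob_rows_le {ξ : ℕ × ℕ → Ω → F} (hξ : iIndepFun ξ P) (hm : ∀ c, Measurable (ξ c))
    (b : ℝ≥0∞) (hb : ∀ c r, P {ω | ξ c ω = r} ≤ b) {k : ℕ} (u : Fin k → F) (j₀ : Fin k)
    (hj₀ : u j₀ ≠ 0) (R : Finset (Fin k)) (hR : ∀ i ∈ R, u i = 0) :
    P {ω | ∀ i ∈ R, (skewF k (fun c => ξ c ω) *ᵥ u) i = 0} ≤ b ^ R.card := by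
  classical
  induction R using Finset.induction_on with
  | empty => simp
  | insert i R hi ih =>
    have ih := ih fun i' h => hR i' (Finset.mem_insert_of_mem h)
    have hui : u i = 0 := hR i (Finset.mem_insert_self _ _)
    have hij : i ≠ j₀ := by rintro rfl; exact hj₀ hui
    let c : ℕ × ℕ := (min (i : ℕ) j₀, max (i : ℕ) j₀)
    let T := (Finset.range k ×ˢ Finset.range k).erase c
    let g : (ℕ × ℕ → F) → ℝ≥0∞ := fun x => if ∀ i ∈ R, (skewF k x *ᵥ u) i = 0 then 1 else 0
    let H : (ℕ × ℕ → F) → (ℕ × ℕ → F) → Prop := fun x y =>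
      (skewF k (Function.update x c (y c)) *ᵥ u) i = 0
    have hij' : (i : ℕ) ≠ j₀ := fun h => hij (Fin.ext h)
    have hg : ∀ x y, (∀ c ∈ T, x c = y c) → g x = g y := by
      intro x y hxy
      have : ∀ i' ∈ R, (skewF k x *ᵥ u) i' = (skewF k y *ᵥ u) i' := by
        intro i' hi'
        have hui' : u i' = 0 := hR i' (Finset.mem_insert_of_mem hi')
        have hne : i' ≠ i := by rintro rfl; exact hi hi'
        have hne' : (i' : ℕ) ≠ i := fun h => hne (Fin.ext h)
        have hne2 : (i' : ℕ) ≠ j₀ := fun h => hj₀ (by rw [← Fin.ext h]; exact hui')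
        refine skewF_row_congr fun j hj => skewF_entry_congr (fun _ => hxy _ ?_) (fun _ => hxy _ ?_)
        all_goals
          simp only [T, c, Finset.mem_erase, ne_eq, Prod.mk.injEq, Finset.mem_product,
            Finset.mem_range, Fin.is_lt, and_self, and_true]
          intro h
          omega
      simp only [g]
      congr 1
      exact propext (forall₂_congr fun i' hi' => by rw [this i' hi'])
    have hH : ∀ x x' y y', (∀ c ∈ T, x c = x' c) → (∀ c' ∈ ({c} : Finset (ℕ × ℕ)), y c' = y' c') →
        H x y → H x' y' := by
      intro x x' y y' h1 h2 h3
      have : skewF k (Function.update x c (y c)) = skewF k (Function.update x' c (y' c)) := by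
        refine skewF_congr fun d hd => ?_
        by_cases hdc : d = c
        · subst hdc; simpa using h2 _ (Finset.mem_singleton_self _)
        · simp only [Function.update_of_ne hdc]
          exact h1 d (Finset.mem_erase.2 ⟨hdc, hd⟩)
      simpa only [H, this] using h3
    have hδ : ∀ x, g x ≠ 0 → P {ω | H x (fun c => ξ c ω)} ≤ b := by
      intro x _
      have huniq : ∀ t t', (skewF k (Function.update x c t) *ᵥ u) i
          = (skewF k (Function.update x c t') *ᵥ u) i → t = t' := by
        intro t t' h
        simp only [mulVec, dotProduct] at h
        rw [← Finset.add_sum_erase _ _ (Finset.mem_univ j₀),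
          ← Finset.add_sum_erase _ _ (Finset.mem_univ j₀)] at h
        have hrest : ∑ j ∈ Finset.univ.erase j₀, skewF k (Function.update x c t) i j * u j
            = ∑ j ∈ Finset.univ.erase j₀, skewF k (Function.update x c t') i j * u j := by
          refine Finset.sum_congr rfl fun j hj => ?_
          have hj1 : (j : ℕ) ≠ j₀ := fun h => (Finset.mem_erase.1 hj).1 (Fin.ext h)
          congr 1
          refine skewF_entry_congr (fun hlt => ?_) (fun hlt => ?_)
          all_goals
            rw [Function.update_of_ne, Function.update_of_ne]
            all_goals
              simp only [c, ne_eq, Prod.mk.injEq]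
              omega
        rw [hrest, add_left_inj] at h
        have h := mul_right_cancel₀ hj₀ h
        simp only [skewF, of_apply] at h
        rcases lt_or_gt_of_ne hij with hlt | hlt
        · have hc : c = ((i : ℕ), (j₀ : ℕ)) := by
            have : (i : ℕ) < j₀ := hlt
            simp only [c, Prod.mk.injEq]; omega
          simpa [hlt, hc] using h
        · have hc : c = ((j₀ : ℕ), (i : ℕ)) := by
            have : (j₀ : ℕ) < i := hlt
            simp only [c, Prod.mk.injEq]; omega
          simpa [hlt, hlt.not_gt, hc] using h
      by_cases hex : ∃ t, (skewF k (Function.update x c t) *ᵥ u) i = 0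
      · obtain ⟨t, ht⟩ := hex
        refine le_trans (measure_mono ?_) (hb c t)
        intro ω hω
        exact huniq _ _ (Eq.trans hω ht.symm)
      · have : {ω | H x (fun c => ξ c ω)} = ∅ := by
          ext ω
          simp only [Set.mem_ofPred_eq, Set.mem_empty_iff_false, iff_false]
          exact fun h => hex ⟨_, h⟩
        simp [this]
    have key := lintegral_indep hξ hm T {c} (by simp [T]) g hg H hH b hδ
    have hmE : ∀ R' : Finset (Fin k),
        MeasurableSet {ω | ∀ i ∈ R', (skewF k (fun c => ξ c ω) *ᵥ u) i = 0} := by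
      intro R'
      have := measurable_of_dep hm (Finset.range k ×ˢ Finset.range k)
        (fun x => if ∀ i ∈ R', (skewF k x *ᵥ u) i = 0 then 1 else 0)
        (fun x y h => by simp only [skewF_congr h])
      convert this (measurableSet_singleton 1) using 1
      ext ω
      simp
    have e1 : ∫⁻ ω, g (fun c => ξ c ω) ∂P
        = P {ω | ∀ i ∈ R, (skewF k (fun c => ξ c ω) *ᵥ u) i = 0} := by
      rw [← lintegral_indicator_one (hmE R)]
      refine lintegral_congr fun ω => ?_
      simp [g, Set.indicator_apply]
    have e2 : ∫⁻ ω, {ω | H (fun c => ξ c ω) (fun c => ξ c ω)}.indicator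
          (fun ω => g (fun c => ξ c ω)) ω ∂P
        = P {ω | ∀ i' ∈ insert i R, (skewF k (fun c => ξ c ω) *ᵥ u) i' = 0} := by
      rw [← lintegral_indicator_one (hmE (insert i R))]
      refine lintegral_congr fun ω => ?_
      simp [g, H, Set.indicator_apply, ← ite_and]
    rw [e1, e2] at key
    rw [Finset.card_insert_of_notMem hi, pow_succ']
    exact key.trans (by gcongr)

lemma prob_mem_kerS_le {ξ : ℕ × ℕ → Ω → F} (hξ : iIndepFun ξ P) (hm : ∀ c, Measurable (ξ c))
    (b : ℝ≥0∞) (hb : ∀ c r, P {ω | ξ c ω = r} ≤ b) {k : ℕ} (u : Fin k → F) (hu : u ≠ 0) :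
    P {ω | u ∈ kerS k (fun c => ξ c ω)} ≤ b ^ (k - supp u) := by
  classical
  obtain ⟨j₀, hj₀⟩ := Function.ne_iff.1 hu
  have h := prob_rows_le hξ hm b hb u j₀ hj₀ (Finset.univ.filter (¬ u · ≠ 0)) (by simp)
  have hc : (Finset.univ.filter (¬ u · ≠ 0)).card = k - supp u := by
    have h1 := Finset.card_filter_add_card_filter_not (s := (Finset.univ : Finset (Fin k))) (u · ≠ 0)
    have h2 := supp_eq u
    simp only [Finset.card_univ, Fintype.card_fin] at h1
    omega
  rw [hc] at h
  refine le_trans (measure_mono ?_) h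
  intro ω hω i _
  exact congrFun (mem_kerS.1 hω) i

/-- The kernel contains a nonzero vector with fewer than `m` nonzero coordinates. -/
def Bad (k m : ℕ) (x : ℕ × ℕ → F) : Prop := ∃ u ∈ kerS k x, u ≠ 0 ∧ supp u < m

/-- Sparse kernel vectors are exponentially unlikely, by a union bound. Sparse vectors are
counted with the generating function `∑ l ^ supp u`. -/
lemma prob_bad_le {ξ : ℕ × ℕ → Ω → F} (hξ : iIndepFun ξ P) (hm : ∀ c, Measurable (ξ c))
    (b : ℝ) (hb0 : 0 < b) (hb1 : b ≤ 1) (hb : ∀ c r, P {ω | ξ c ω = r} ≤ ENNReal.ofReal b)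
    (l : ℝ) (hl0 : 0 < l) (hl1 : l ≤ 1) (k m : ℕ) :
    P {ω | Bad k m (fun c => ξ c ω)}
      ≤ ENNReal.ofReal (((b * l) ^ m)⁻¹ * (b * (1 + Fintype.card F * l)) ^ k) := by
  classical
  let S : Finset (Fin k → F) := Finset.univ.filter fun u => u ≠ 0 ∧ supp u < m
  have h1 : P {ω | Bad k m (fun c => ξ c ω)} ≤ ∑ u ∈ S, P {ω | u ∈ kerS k (fun c => ξ c ω)} := by
    refine le_trans (measure_mono ?_) (measure_biUnion_finset_le S _)
    rintro ω ⟨u, hu, h0, hs⟩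
    simp only [Set.mem_iUnion]
    exact ⟨u, by simp [S, h0, hs], hu⟩
  refine h1.trans ?_
  have h2 : ∀ u ∈ S, P {ω | u ∈ kerS k (fun c => ξ c ω)}
      ≤ ENNReal.ofReal (((b * l) ^ m)⁻¹ * b ^ k * l ^ supp u) := by
    intro u hu
    simp only [S, Finset.mem_filter, Finset.mem_univ, true_and] at hu
    refine (prob_mem_kerS_le hξ hm _ hb u hu.1).trans ?_
    rw [← ENNReal.ofReal_pow hb0.le]
    refine ENNReal.ofReal_le_ofReal ?_
    have hsk : supp u ≤ k := by
      unfold supp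
      exact (Finset.card_le_univ _).trans (by simp)
    rw [mul_assoc, le_inv_mul_iff₀ (by positivity)]
    calc (b * l) ^ m * b ^ (k - supp u) ≤ (b * l) ^ supp u * b ^ (k - supp u) := by
          gcongr ?_ * _
          exact pow_le_pow_of_le_one (by positivity) (mul_le_one₀ hb1 hl0.le hl1) hu.2.le
      _ = b ^ (supp u + (k - supp u)) * l ^ supp u := by rw [mul_pow, pow_add]; ring
      _ = b ^ k * l ^ supp u := by rw [Nat.add_sub_cancel' hsk]
  refine (Finset.sum_le_sum h2).trans ?_
  rw [← ENNReal.ofReal_sum_of_nonneg (fun u _ => by positivity)]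
  refine ENNReal.ofReal_le_ofReal ?_
  rw [← Finset.mul_sum, mul_pow b (1 + _), ← mul_assoc]
  gcongr
  refine le_trans ?_ (sum_pow_supp (F := F) k l hl0.le)
  exact Finset.sum_le_sum_of_subset_of_nonneg (Finset.subset_univ _) fun u _ _ => by positivity

end SparseKernel
end SkewRank

/-! ### The potential and its drift -/

namespace SkewRank

open Matrix ProbabilityTheory
open scoped ENNReal NNReal

section Drift

variable {F : Type*} [Field F]

open Classical in
/-- The potential `C ^ corank`, cut off to `0` when the corank is at most one. -/
def pot (C : ℝ≥0∞) (k : ℕ) (x : ℕ × ℕ → F) : ℝ≥0∞ :=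
  if 2 ≤ corank k x then C ^ corank k x else 0

open Classical in
/-- The quantity `C ^ corank` on the event that the kernel is nonzero and has no nonzero vector
with fewer than `m` nonzero coordinates. -/
def goodPot (C : ℝ≥0∞) (m k : ℕ) (x : ℕ × ℕ → F) : ℝ≥0∞ :=
  if Bad k m x ∨ corank k x = 0 then 0 else C ^ corank k x

lemma goodPot_le {C : ℝ≥0∞} (m k : ℕ) (x : ℕ × ℕ → F) :
    goodPot C m k x ≤ C + pot C k x := by
  unfold goodPot pot
  split_ifs with h1 h2 h2
  · exact zero_le
  · exact zero_le
  · exact le_add_self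
  · have : corank k x = 1 := by
      have : corank k x ≠ 0 := fun h => h1 (Or.inr h)
      omega
    simp [this]

open Classical in
/-- One step of the corank walk: the potential shrinks by `C⁻¹` unless the new column lies in the
column space; that case is split according to whether the kernel has a sparse vector. -/
lemma pot_succ_le {C : ℝ≥0∞} (hC : 1 ≤ C) (hC' : C ≠ ∞) (m k : ℕ) (x : ℕ × ℕ → F) :
    pot C (k + 1) x ≤ C⁻¹ * pot C k x
      + ((if Fails k x then C * goodPot C m k x else 0)
      + (if Bad k m x then C ^ (k + 1) else 0)) := by
  have hC0 : C ≠ 0 := by rintro rfl; simp at hC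
  by_cases hF : Fails k x
  · have hX := corank_succ_of_fails hF
    by_cases hB : Bad k m x
    · refine le_trans ?_ (le_trans le_add_self le_add_self)
      simp only [hB, if_true, pot]
      split_ifs
      · exact pow_le_pow_right₀ hC (corank_le _ _)
      · exact zero_le
    · by_cases h0 : corank k x = 0
      · simp [pot, hX, h0]
      · refine le_trans ?_ (le_trans le_self_add le_add_self)
        simp only [hF, if_true, pot, goodPot, hB, h0, or_self, if_false, hX, pow_succ']
        split_ifs
        · exact le_rfl
        · exact zero_le
  · have hX := corank_succ_of_not_fails hF
    refine le_trans ?_ le_self_add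
    by_cases h2 : 2 ≤ corank (k + 1) x
    · have h3 : 2 ≤ corank k x := by omega
      simp only [pot, h2, h3, if_true]
      rw [← hX, pow_succ', ← mul_assoc, ENNReal.inv_mul_cancel hC0 hC', one_mul]
    · simp [pot, h2]

lemma kerS_congr {k : ℕ} {x y : ℕ × ℕ → F}
    (h : ∀ c ∈ Finset.range k ×ˢ Finset.range k, x c = y c) : kerS k x = kerS k y := by
  rw [kerS, kerS, skewF_congr h]

lemma corank_congr {k : ℕ} {x y : ℕ × ℕ → F}
    (h : ∀ c ∈ Finset.range k ×ˢ Finset.range k, x c = y c) : corank k x = corank k y := by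
  rw [corank, corank, kerS_congr h]

lemma bad_congr {k m : ℕ} {x y : ℕ × ℕ → F}
    (h : ∀ c ∈ Finset.range k ×ˢ Finset.range k, x c = y c) : Bad k m x = Bad k m y := by
  rw [Bad, Bad, kerS_congr h]

end Drift

/-! ### The recursion for the expected potential -/

section Recurrence

variable {p : ℕ} [Fact p.Prime] {Ω : Type*} [MeasurableSpace Ω] {P : Measure Ω}

lemma prob_two_le_corank_le {ξ : ℕ × ℕ → Ω → ZMod p} (hm : ∀ c, Measurable (ξ c))
    {C : ℝ≥0∞} (hC : 1 ≤ C) (k : ℕ) :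
    P {ω | 2 ≤ corank k (fun c => ξ c ω)} ≤ ∫⁻ ω, pot C k (fun c => ξ c ω) ∂P := by
  have hpotm : Measurable fun ω => pot C k (fun c => ξ c ω) :=
    measurable_of_dep hm (Finset.range k ×ˢ Finset.range k) _
      fun x y h => by simp only [pot, corank_congr h]
  have := mul_meas_ge_le_lintegral (μ := P) hpotm 1
  rw [one_mul] at this
  refine le_trans (measure_mono ?_) this
  intro ω hω
  have hω : 2 ≤ corank k (fun c => ξ c ω) := hω
  simp only [Set.mem_ofPred_eq, pot, hω, if_true]
  exact one_le_pow₀ hC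

variable [IsProbabilityMeasure P]

/-- For a fixed matrix with nonzero kernel free of sparse vectors, a random new column is unlikely
to be orthogonal to the kernel. -/
lemma prob_fails_le {ξ : ℕ × ℕ → Ω → ZMod p} (hξ : iIndepFun ξ P)
    (hm : ∀ c, Measurable (ξ c)) {ρ : ℝ} (hρ0 : 0 ≤ ρ) (hρ1 : ρ ≤ 1)
    (hρ : ∀ c, ∀ a : ZMod p, a ≠ 0 → ‖∫ ω, ZMod.stdAddChar (a * ξ c ω) ∂P‖ ≤ ρ)
    {m k : ℕ} {x : ℕ × ℕ → ZMod p} (hB : ¬ Bad k m x) (h0 : corank k x ≠ 0) :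
    P {ω | ∀ u ∈ kerS k x, newCol k (fun c => ξ c ω) ⬝ᵥ u = 0}
      ≤ ENNReal.ofReal (1 / p + ρ ^ m) := by
  have hne : kerS k x ≠ ⊥ := by
    intro h
    exact h0 (by rw [corank, h]; simp)
  obtain ⟨u, hu, hu0⟩ := Submodule.exists_mem_ne_zero_of_ne_bot hne
  have hsz : m ≤ supp u := by
    by_contra h
    exact hB ⟨u, hu, hu0, by omega⟩
  have hinj : Function.Injective fun i : Fin k => ((i : ℕ), k) := by
    intro a b h
    simpa [Fin.ext_iff] using h
  have hlo := prob_dot_eq_zero_le (P := P) (X := fun (i : Fin k) ω => ξ ((i : ℕ), k) ω)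
    (hξ.precomp hinj) (fun i => hm _) hρ0 (fun i a ha => hρ _ a ha) u
  have h1 : {ω | ∀ u ∈ kerS k x, newCol k (fun c => ξ c ω) ⬝ᵥ u = 0}
      ⊆ {ω | ∑ i : Fin k, ξ ((i : ℕ), k) ω * u i = 0} := by
    intro ω hω
    exact hω u hu
  refine (measure_mono h1).trans ?_
  rw [← ofReal_measureReal]
  refine ENNReal.ofReal_le_ofReal (hlo.trans ?_)
  rw [← supp_eq]
  exact add_le_add le_rfl (pow_le_pow_of_le_one hρ0 hρ1 hsz)

/-- The drift inequality for the expected potential. -/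
lemma lintegral_pot_succ_le {ξ : ℕ × ℕ → Ω → ZMod p} (hξ : iIndepFun ξ P)
    (hm : ∀ c, Measurable (ξ c)) {ρ : ℝ} (hρ0 : 0 ≤ ρ) (hρ1 : ρ ≤ 1)
    (hρ : ∀ c, ∀ a : ZMod p, a ≠ 0 → ‖∫ ω, ZMod.stdAddChar (a * ξ c ω) ∂P‖ ≤ ρ)
    {C : ℝ≥0∞} (hC : 1 ≤ C) (hC' : C ≠ ∞) (m k : ℕ) :
    ∫⁻ ω, pot C (k + 1) (fun c => ξ c ω) ∂P
      ≤ C⁻¹ * ∫⁻ ω, pot C k (fun c => ξ c ω) ∂P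
        + (C * (ENNReal.ofReal (1 / p + ρ ^ m) * (C + ∫⁻ ω, pot C k (fun c => ξ c ω) ∂P))
          + C ^ (k + 1) * P {ω | Bad k m (fun c => ξ c ω)}) := by
  classical
  set T := Finset.range k ×ˢ Finset.range k with hT
  have hTU : Disjoint T (Finset.range k ×ˢ {k}) := by
    rw [Finset.disjoint_left]
    rintro ⟨a, b⟩ h1 h2
    simp only [hT, Finset.mem_product, Finset.mem_range, Finset.mem_singleton] at h1 h2
    omega
  have hpotm : Measurable fun ω => pot C k (fun c => ξ c ω) :=
    measurable_of_dep hm T _ fun x y h => by simp only [pot, corank_congr h]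
  have hbadm : MeasurableSet {ω | Bad k m (fun c => ξ c ω)} := by
    have := measurable_of_dep hm T (fun x => if Bad k m x then 1 else 0)
      (fun x y h => by simp only [bad_congr h])
    convert this (measurableSet_singleton 1) using 1
    ext ω
    simp
  have hgood := lintegral_indep hξ hm T (Finset.range k ×ˢ {k}) hTU (goodPot C m k)
    (fun x y h => by simp only [goodPot, corank_congr h, bad_congr h])
    (fun x y => ∀ u ∈ kerS k x, newCol k y ⬝ᵥ u = 0)
    (by
      intro x x' y y' h1 h2 h3 u hu
      rw [← kerS_congr h1] at hu
      have : newCol k y = newCol k y' := by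
        ext i
        exact h2 _ (by simp)
      rw [← this]
      exact h3 u hu)
    (ENNReal.ofReal (1 / p + ρ ^ m))
    (by
      intro x hx
      have hx' : ¬ (Bad k m x ∨ corank k x = 0) := by
        intro h
        exact hx (by simp [goodPot, h])
      push Not at hx'
      exact prob_fails_le hξ hm hρ0 hρ1 hρ hx'.1 hx'.2)
  have hgood2 : ∫⁻ ω, goodPot C m k (fun c => ξ c ω) ∂P
      ≤ C + ∫⁻ ω, pot C k (fun c => ξ c ω) ∂P := by
    refine (lintegral_mono fun ω => goodPot_le m k _).trans ?_
    rw [lintegral_add_left measurable_const]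
    simp
  refine (lintegral_mono fun ω => pot_succ_le hC hC' m k _).trans ?_
  rw [lintegral_add_left (hpotm.const_mul _), lintegral_const_mul _ hpotm]
  gcongr
  have hind : Measurable fun ω => if Bad k m (fun c => ξ c ω) then C ^ (k + 1) else 0 :=
    Measurable.ite hbadm measurable_const measurable_const
  rw [lintegral_add_right _ hind]
  refine add_le_add ?_ ?_
  · have e : ∀ ω, (if Fails k (fun c => ξ c ω) then C * goodPot C m k (fun c => ξ c ω) else 0)
        = C * {ω | ∀ u ∈ kerS k (fun c => ξ c ω), newCol k (fun c => ξ c ω) ⬝ᵥ u = 0}.indicator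
          (fun ω => goodPot C m k (fun c => ξ c ω)) ω := by
      intro ω
      by_cases h : Fails k (fun c => ξ c ω)
      · rw [if_pos h, Set.indicator_of_mem (by exact h)]
      · rw [if_neg h, Set.indicator_of_notMem (by exact h), mul_zero]
    simp_rw [e]
    rw [lintegral_const_mul' _ _ hC']
    gcongr
    exact hgood.trans (by gcongr)
  · have e : ∀ ω, (if Bad k m (fun c => ξ c ω) then C ^ (k + 1) else 0)
        = {ω | Bad k m (fun c => ξ c ω)}.indicator (fun _ => C ^ (k + 1)) ω := by
      intro ω
      simp [Set.indicator_apply]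
    simp_rw [e]
    rw [lintegral_indicator_const hbadm]

lemma lintegral_pot_le {ξ : ℕ × ℕ → Ω → ZMod p} {C : ℝ≥0∞} (hC : 1 ≤ C) (k : ℕ) :
    ∫⁻ ω, pot C k (fun c => ξ c ω) ∂P ≤ C ^ k := by
  have h : ∀ ω, pot C k (fun c => ξ c ω) ≤ C ^ k := by
    intro ω
    unfold pot
    split_ifs
    · exact pow_le_pow_right₀ hC (corank_le _ _)
    · exact zero_le
  refine (lintegral_mono h).trans ?_
  simp

/-- A sequence satisfying a contracting affine recursion with exponentially small perturbation is
eventually close to the fixed point. -/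
lemma eventually_le_of_recursion {f : ℕ → ℝ} {θ D K r ε : ℝ} (hθ0 : 0 ≤ θ) (hθ : θ < 1)
    (hr0 : 0 ≤ r) (hr : r < 1) (hK : 0 ≤ K) (hε : 0 < ε)
    (h : ∀ k, f (k + 1) ≤ θ * f k + D + K * r ^ k) :
    ∀ᶠ k in atTop, f k ≤ D / (1 - θ) + ε := by
  obtain ⟨s, hs1, hs2⟩ := exists_between (max_lt hθ hr)
  have hθs : θ < s := (le_max_left _ _).trans_lt hs1
  have hrs : r < s := (le_max_right _ _).trans_lt hs1
  have hs0 : 0 ≤ s := hθ0.trans hθs.le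
  set E := D / (1 - θ) with hE
  have hfix : θ * E + D = E := by
    have : (1 - θ) ≠ 0 := by linarith
    rw [hE]; field_simp; ring
  set M := max (f 0 - E) (K / (s - θ)) with hM
  have hMK : K ≤ M * (s - θ) := by
    have := le_max_right (f 0 - E) (K / (s - θ))
    rwa [div_le_iff₀ (by linarith)] at this
  have hb : ∀ k, f k ≤ E + M * s ^ k := by
    intro k
    induction k with
    | zero =>
      have := le_max_left (f 0 - E) (K / (s - θ))
      simp only [pow_zero, mul_one]
      linarith
    | succ k ih =>
      have h1 := h k
      have h2 : θ * f k ≤ θ * (E + M * s ^ k) := by gcongr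
      have h3 : K * r ^ k ≤ K * s ^ k := by gcongr
      have h4 : K * s ^ k ≤ M * (s - θ) * s ^ k := by gcongr
      have h5 : M * s ^ (k + 1) = θ * (M * s ^ k) + M * (s - θ) * s ^ k := by ring
      linarith
  have hlim : Tendsto (fun k => M * s ^ k) atTop (nhds 0) := by
    simpa using (tendsto_pow_atTop_nhds_zero_of_lt_one hs0 hs2).const_mul M
  filter_upwards [hlim.eventually (gt_mem_nhds hε)] with k hk
  linarith [hb k]

/-- With `m` and `p` chosen so that `1 / p + ρ ^ m ≤ δ`, the probability of corank at least two is
eventually at most `32 * δ / α`, up to `ε`. The base `C = 1 + α / 4` of the potential is small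
enough that `C ^ k` is beaten by the bound of order `(1 - α / 2) ^ k` for a sparse kernel vector. -/
lemma eventually_prob_corank_le {ξ : ℕ × ℕ → Ω → ZMod p} (hξ : iIndepFun ξ P)
    (hm : ∀ c, Measurable (ξ c)) {α : ℝ} (hα0 : 0 < α) (hα1 : α ≤ 1 / 2)
    (hb : ∀ c r, P {ω | ξ c ω = r} ≤ ENNReal.ofReal (1 - α))
    {ρ : ℝ} (hρ0 : 0 ≤ ρ) (hρ1 : ρ ≤ 1)
    (hρ : ∀ c, ∀ a : ZMod p, a ≠ 0 → ‖∫ ω, ZMod.stdAddChar (a * ξ c ω) ∂P‖ ≤ ρ)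
    (m : ℕ) {δ : ℝ} (hδ : 1 / p + ρ ^ m ≤ δ) (hδ2 : δ ≤ α / 32) {ε : ℝ} (hε : 0 < ε) :
    ∀ᶠ k in atTop, P.real {ω | 2 ≤ corank k (fun c => ξ c ω)} ≤ 32 * δ / α + ε := by
  have hp0 : (0 : ℝ) < p := by exact_mod_cast (Fact.out : p.Prime).pos
  have hδ0 : 0 < δ := lt_of_lt_of_le (by positivity) hδ
  set c : ℝ := 1 + α / 4 with hc
  have hc0 : 0 < c := by positivity
  set C : ℝ≥0∞ := ENNReal.ofReal c with hCdef
  have hC1 : 1 ≤ C := by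
    rw [hCdef, ENNReal.one_le_ofReal]; linarith
  have hCt : C ≠ ∞ := ENNReal.ofReal_ne_top
  set l : ℝ := α / (2 * p) with hl
  have hl0 : 0 < l := by positivity
  have hl1 : l ≤ 1 := by
    have : (1 : ℝ) ≤ p := by exact_mod_cast (Fact.out : p.Prime).one_le
    rw [hl, div_le_one (by positivity)]; linarith
  set q : ℝ := (1 - α) * (1 + α / 2) with hq
  have hq0 : 0 ≤ q := by rw [hq]; apply mul_nonneg <;> linarith
  set K : ℝ := (((1 - α) * l) ^ m)⁻¹ with hK
  have hK0 : 0 ≤ K := by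
    rw [hK]
    have : 0 ≤ 1 - α := by linarith
    positivity
  have hbad : ∀ k, P {ω | Bad k m (fun c => ξ c ω)} ≤ ENNReal.ofReal (K * q ^ k) := by
    intro k
    have := prob_bad_le hξ hm (1 - α) (by linarith) (by linarith) hb l hl0 hl1 k m
    rw [ZMod.card] at this
    have hpl : (p : ℝ) * l = α / 2 := by rw [hl]; field_simp
    rwa [hpl] at this
  let f : ℕ → ℝ := fun k => (∫⁻ ω, pot C k (fun c => ξ c ω) ∂P).toReal
  have hft : ∀ k, ∫⁻ ω, pot C k (fun c => ξ c ω) ∂P ≠ ∞ := fun k =>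
    ne_top_of_le_ne_top (ENNReal.pow_ne_top hCt) (lintegral_pot_le hC1 k)
  have hfo : ∀ k, ∫⁻ ω, pot C k (fun c => ξ c ω) ∂P = ENNReal.ofReal (f k) := fun k =>
    (ENNReal.ofReal_toReal (hft k)).symm
  have hf0 : ∀ k, 0 ≤ f k := fun k => ENNReal.toReal_nonneg
  have hrec : ∀ k, f (k + 1) ≤ (c⁻¹ + c * δ) * f k + c * δ * c + (c * K) * (c * q) ^ k := by
    intro k
    have h1 := lintegral_pot_succ_le hξ hm hρ0 hρ1 hρ hC1 hCt m k
    have h2 : ∫⁻ ω, pot C (k + 1) (fun c => ξ c ω) ∂P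
        ≤ C⁻¹ * ∫⁻ ω, pot C k (fun c => ξ c ω) ∂P
        + (C * (ENNReal.ofReal δ * (C + ∫⁻ ω, pot C k (fun c => ξ c ω) ∂P))
          + C ^ (k + 1) * ENNReal.ofReal (K * q ^ k)) := by
      refine h1.trans ?_
      gcongr
      exact hbad k
    have hf0k := hf0 k
    rw [hfo, hfo, hCdef, ← ENNReal.ofReal_inv_of_pos hc0, ← ENNReal.ofReal_pow hc0.le,
      ← ENNReal.ofReal_mul (by positivity), ← ENNReal.ofReal_add (by positivity) hf0k,
      ← ENNReal.ofReal_mul (by positivity), ← ENNReal.ofReal_mul (by positivity),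
      ← ENNReal.ofReal_mul (by positivity), ← ENNReal.ofReal_add (by positivity) (by positivity),
      ← ENNReal.ofReal_add (by positivity) (by positivity),
      ENNReal.ofReal_le_ofReal_iff (by positivity)] at h2
    refine h2.trans (le_of_eq ?_)
    rw [mul_pow c q k]; ring
  have hcinv : c⁻¹ ≤ 1 - α / 8 := by
    rw [inv_le_iff_one_le_mul₀ hc0, hc]; nlinarith
  have hcδ : c * δ ≤ α / 16 := by rw [hc]; nlinarith
  have hθ : c⁻¹ + c * δ ≤ 1 - α / 16 := by linarith
  have hcq : c * q < 1 := by rw [hc, hq]; nlinarith [mul_pos hα0 hα0, mul_pos (mul_pos hα0 hα0) hα0]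
  have hev := eventually_le_of_recursion (f := f) (by positivity) (by linarith) (by positivity) hcq
    (by positivity) hε hrec
  filter_upwards [hev] with k hk
  have h3 : P.real {ω | 2 ≤ corank k (fun c => ξ c ω)} ≤ f k :=
    ENNReal.toReal_mono (hft k) (prob_two_le_corank_le hm hC1 k)
  have h4 : c * δ * c / (1 - (c⁻¹ + c * δ)) ≤ 32 * δ / α := by
    rw [div_le_div_iff₀ (by linarith) hα0]
    have h5 : c * δ * c ≤ 2 * δ := by rw [hc]; nlinarith
    have h6 : 32 * δ * (α / 16) ≤ 32 * δ * (1 - (c⁻¹ + c * δ)) := by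
      gcongr; linarith
    nlinarith
  linarith

end Recurrence
end SkewRank

/-! ### From residues to rational rank -/

namespace SkewRank

open Matrix ProbabilityTheory
open scoped ENNReal NNReal

section Transfer

lemma skewF_cast {R : Type*} [Field R] (k : ℕ) (z : ℕ × ℕ → ℤ) :
    skewF k (fun c => (z c : R))
      = (skewMatrix k fun c => z (c.1, c.2)).map (Int.castRingHom R) := by
  ext i j
  simp only [skewF, skewMatrix, of_apply, map_apply]
  split_ifs <;> simp

/-- Nonsingularity modulo `p` implies nonsingularity over `ℚ`. -/
lemma corank_rat_eq_zero {p : ℕ} [Fact p.Prime] {k : ℕ} {z : ℕ × ℕ → ℤ}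
    (h : corank k (fun c => (z c : ZMod p)) = 0) : corank k (fun c => (z c : ℚ)) = 0 := by
  rw [corank_eq_zero_iff, skewF_cast, ← RingHom.mapMatrix_apply, ← RingHom.map_det] at h ⊢
  intro h0
  have h1 : (skewMatrix k fun c => z (c.1, c.2)).det = 0 := by
    simpa using h0
  exact h (by rw [h1, map_zero])

/-- Corank at most one modulo `p` in the even size `n` or `n + 1` forces the rank over `ℚ` to be as
large as parity permits. -/
lemma rank_eq_of_corank {p : ℕ} [Fact p.Prime] {n : ℕ} {z : ℕ × ℕ → ℤ}
    (h : corank (n + n % 2) (fun c => (z c : ZMod p)) < 2) :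
    ((skewMatrix n fun c => z (c.1, c.2)).map (fun a : ℤ => (a : ℚ))).rank
      = n - (if Odd n then 1 else 0) := by
  have h0 : corank (n + n % 2) (fun c => (z c : ℚ)) = 0 := by
    apply corank_rat_eq_zero (p := p)
    have := corank_parity (n + n % 2) (fun c => (z c : ZMod p))
    omega
  have h1 := rank_add_corank n (fun c => (z c : ℚ))
  rw [skewF_cast] at h1
  have h2 : ((skewMatrix n fun c => z (c.1, c.2)).map (fun a : ℤ => (a : ℚ))).rank
      + corank n (fun c => (z c : ℚ)) = n := h1
  rcases Nat.even_or_odd n with hn | hn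
  · rw [if_neg (Nat.not_odd_iff_even.2 hn)]
    rw [Nat.even_iff.1 hn, add_zero] at h0
    omega
  · rw [if_pos hn]
    rw [Nat.odd_iff.1 hn] at h0
    have h3 := corank_le_succ n (fun c => (z c : ℚ))
    have h4 := corank_parity n (fun c => (z c : ℚ))
    rw [Nat.odd_iff.1 hn] at h4
    omega

end Transfer

/-! ### The random model as corners of an infinite array -/

section Model

variable (μ : Measure ℤ) [hμ : IsProbabilityMeasure μ]

/-- The law of an infinite array of independent copies of the entry distribution. -/
def arrayMeasure : Measure (ℕ × ℕ → ℤ) := Measure.infinitePi fun _ => μ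

instance : IsProbabilityMeasure (arrayMeasure μ) := by
  unfold arrayMeasure; infer_instance

/-- The finite models are the corners of the infinite array. -/
lemma matMeasure_eq_map (n : ℕ) :
    matMeasure μ hμ n
      = (arrayMeasure μ).map fun z (c : Fin n × Fin n) => z ((c.1 : ℕ), (c.2 : ℕ)) := by
  have hinj : Function.Injective fun c : Fin n × Fin n => ((c.1 : ℕ), (c.2 : ℕ)) := by
    rintro ⟨a, b⟩ ⟨c, d⟩ h
    simpa [Fin.ext_iff] using h
  rw [arrayMeasure, Measure.map_infinitePi_infinitePi_of_inj (P := fun _ => μ) hinj,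
    Measure.infinitePi_eq_pi]
  rfl

lemma arrayMeasure_map_eval (c : ℕ × ℕ) : (arrayMeasure μ).map (fun z => z c) = μ :=
  Measure.infinitePi_map_eval (fun _ => μ) c

/-- For a suitable large prime `p`, corank at least two modulo `p` is eventually as unlikely as
desired. -/
lemma eventually_corank_lt {α : ℝ} (hα0 : 0 < α) (hα1 : α ≤ 1 / 2) (hbal : IsBalanced α μ)
    {η : ℝ} (hη : 0 < η) :
    ∃ (p : ℕ) (_ : Fact p.Prime), ∀ᶠ k in atTop,
      (arrayMeasure μ).real {z | 2 ≤ corank k (fun c => (z c : ZMod p))} ≤ η := by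
  -- the target `32 * δ / α + η / 2 ≤ η` of the drift estimate dictates `δ`
  set δ : ℝ := min (α / 32) (η * α / 64) with hδ
  have hδ0 : 0 < δ := by positivity
  obtain ⟨N, hN⟩ := exists_nat_gt (2 / δ)
  obtain ⟨p, hpN, hp⟩ := Nat.exists_infinite_primes N
  have : Fact p.Prime := ⟨hp⟩
  have hp0 : (0 : ℝ) < p := by exact_mod_cast hp.pos
  have hpδ : 1 / (p : ℝ) ≤ δ / 2 := by
    have h1 : 2 / δ ≤ p := hN.le.trans (by exact_mod_cast hpN)
    rw [div_le_iff₀ hδ0] at h1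
    rw [div_le_iff₀ hp0]
    linarith
  have hcast : Measurable (fun a : ℤ => (a : ZMod p)) := .of_discrete
  set ν : Measure (ZMod p) := μ.map fun a : ℤ => (a : ZMod p) with hν
  have : IsProbabilityMeasure ν := Measure.isProbabilityMeasure_map hcast.aemeasurable
  have hνr : ∀ r, ν {r} ≤ ENNReal.ofReal (1 - α) := by
    intro r
    rw [hν, Measure.map_apply hcast (measurableSet_singleton r)]
    exact hbal p hp r
  obtain ⟨ρ, hρ0, hρ1, hρ⟩ := exists_fourier_gap ν fun r =>
    (hνr r).trans_lt (by rw [ENNReal.ofReal_lt_one]; linarith)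
  obtain ⟨m, hm⟩ := exists_pow_lt_of_lt_one (half_pos hδ0) hρ1
  refine ⟨p, inferInstance, ?_⟩
  let ξ : ℕ × ℕ → (ℕ × ℕ → ℤ) → ZMod p := fun c z => (z c : ZMod p)
  have hξ : iIndepFun ξ (arrayMeasure μ) :=
    iIndepFun_infinitePi (P := fun _ => μ) (X := fun _ a => (a : ZMod p)) fun _ => hcast
  have hξm : ∀ c, Measurable (ξ c) := fun c => hcast.comp (measurable_pi_apply c)
  have hξν : ∀ c, (arrayMeasure μ).map (ξ c) = ν := by
    intro c
    have := Measure.map_map (μ := arrayMeasure μ) hcast (measurable_pi_apply c)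
    rw [arrayMeasure_map_eval] at this
    exact this.symm
  have hξb : ∀ c r, arrayMeasure μ {z | ξ c z = r} ≤ ENNReal.ofReal (1 - α) := by
    intro c r
    have h := hνr r
    rw [← hξν c, Measure.map_apply (hξm c) (measurableSet_singleton r)] at h
    exact h
  have hξρ : ∀ c, ∀ a : ZMod p, a ≠ 0 →
      ‖∫ z, ZMod.stdAddChar (a * ξ c z) ∂(arrayMeasure μ)‖ ≤ ρ := by
    intro c a ha
    have h := hρ a ha
    rw [← hξν c, integral_map (hξm c).aemeasurable
      (Measurable.of_discrete (f := fun r : ZMod p =>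
        (ZMod.stdAddChar (a * r) : ℂ))).aestronglyMeasurable] at h
    exact h
  have hev := eventually_prob_corank_le hξ hξm hα0 hα1 hξb hρ0 hρ1.le hξρ m (δ := δ)
    (by linarith) (min_le_left _ _) (half_pos hη)
  filter_upwards [hev] with k hk
  refine hk.trans ?_
  have h1 : δ ≤ η * α / 64 := min_le_right _ _
  have h2 : 32 * δ / α ≤ η / 2 := by
    rw [div_le_iff₀ hα0]
    linarith
  linarith

end Model

end SkewRank

theorem skew_rank_full (α : ℝ) (hα : 0 < α)
    (μ : Measure ℤ) (hμ : IsProbabilityMeasure μ) (hbal : IsBalanced α μ) :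
    Tendsto
      (fun n : ℕ =>
        ((matMeasure μ hμ n)
          {x | ((skewMatrix n x).map (fun z : ℤ => (z : ℚ))).rank
              = n - (if Odd n then 1 else 0)}).toReal)
      atTop (nhds 1) := by
  have hbal' : IsBalanced (min α (1 / 2)) μ := fun p hp r =>
    (hbal p hp r).trans (ENNReal.ofReal_le_ofReal (by linarith [min_le_left α (1 / 2)]))
  have hr : ∀ n, Measurable fun (z : ℕ × ℕ → ℤ) (c : Fin n × Fin n) =>
      z ((c.1 : ℕ), (c.2 : ℕ)) := fun n => by fun_prop
  have hprob : ∀ n, IsProbabilityMeasure (matMeasure μ hμ n) := fun n => by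
    rw [SkewRank.matMeasure_eq_map]
    exact Measure.isProbabilityMeasure_map (hr n).aemeasurable
  refine tendsto_order.2 ⟨fun a ha => ?_, fun a ha => .of_forall fun n => ?_⟩
  · obtain ⟨p, _, hev⟩ := SkewRank.eventually_corank_lt μ (lt_min hα one_half_pos)
      (min_le_right _ _) hbal' (half_pos (sub_pos.2 ha))
    have hN : Tendsto (fun n : ℕ => n + n % 2) atTop atTop :=
      tendsto_atTop_mono (fun n => Nat.le_add_right n _) tendsto_id
    filter_upwards [hN.eventually hev] with n hn
    set B := {z : ℕ × ℕ → ℤ | 2 ≤ SkewRank.corank (n + n % 2) (fun c => (z c : ZMod p))} with hB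
    set S := {x | ((skewMatrix n x).map (fun z : ℤ => (z : ℚ))).rank
              = n - (if Odd n then 1 else 0)} with hS
    have hSm : MeasurableSet S := S.to_countable.measurableSet
    have h1 : ((matMeasure μ hμ n) S).toReal = (SkewRank.arrayMeasure μ).real
        ((fun z (c : Fin n × Fin n) => z ((c.1 : ℕ), (c.2 : ℕ))) ⁻¹' S) := by
      rw [SkewRank.matMeasure_eq_map, Measure.map_apply (hr n) hSm]
      rfl
    have h2 : Bᶜ ⊆ (fun z (c : Fin n × Fin n) => z ((c.1 : ℕ), (c.2 : ℕ))) ⁻¹' S := by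
      intro z hz
      exact SkewRank.rank_eq_of_corank (p := p) (not_le.1 hz)
    have h3 : 1 ≤ (SkewRank.arrayMeasure μ).real B + (SkewRank.arrayMeasure μ).real Bᶜ := by
      have := measureReal_union_le (μ := SkewRank.arrayMeasure μ) B Bᶜ
      rwa [Set.union_compl_self, probReal_univ] at this
    have h4 := measureReal_mono (μ := SkewRank.arrayMeasure μ) h2
    rw [h1]
    linarith
  · have := hprob n
    exact measureReal_le_one.trans_lt ha
end
end

section
/- Let A_n be the random skew-symmetric matrix model with α-balanced entries. For every prime p and every integer r ≥ 0: lim_{n→∞} P(rank(A_{2n}/p) = 2n − 2r) = p^{−r(2r−1)} · (∏_{i=r}^∞ (1 − p^{−2i−1})) / (∏_{k=1}^r (1 − p^{−2k})), and lim_{n→∞} P(rank(A_{2n+1}/p) = 2n − 2r) = p^{−r(2r+1)} · (∏_{i=r+1}^∞ (1 − p^{−2i−1})) / (∏_{k=1}^r (1 − p^{−2k})). -/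
/-!
Only the residues of the entries modulo `p` matter, so the probability space is replaced by the
finite product space of residues, with entry weights `w = resWeight μ p` on `ZMod p`. Being
balanced says that no residue has full mass; hence all nontrivial Fourier coefficients of `w` are
bounded in norm by some `ρ < 1` (`exists_entryChar_bound`).

The matrix is grown one row and column at a time. If a skew-symmetric matrix `A` over a field is
bordered by a vector `x`, its corank goes up by one when `x` is orthogonal to `ker A` and down by
one otherwise (`corank_succ_of_perp`, `corank_succ_of_not_perp`). For uniform `x` the first event
has probability `p⁻ᶜ`, where `c` is the corank of `A`, so for uniform entries the corank is a Markov
chain on `ℕ`. For the weights `w`, Fourier inversion gives the probability `p⁻ᶜ` up to a relative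
error at most the sum of `ρ ^ |v|` over nonzero `v ∈ ker A`, where `|v|` is the number of nonzero
coordinates of `v` (`abs_Ex_perp_sub_le`).

The expectation `epsErr w ρ n` of that error tends to `0` (`tendsto_epsErr`). It is the sum over
`v ≠ 0` of `ρ ^ |v| * P(A v = 0)`, and revealing the matrix one row at a time bounds `P(A v = 0)` by
a product of one-row probabilities (`Ex_mulVec_eq_le`). For `|v|` below a small multiple of `n`
there are few vectors and each contributes exponentially little; for larger `|v|` one has
`P(A v = 0) = O(p⁻ⁿ)`, which summed over the at most `pⁿ` vectors against `ρ ^ |v|` gives `o(1)`.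

The tail probabilities `P(corank ≥ c)` therefore satisfy the recursion of the uniform chain
(`idealTail`) up to `p⁻ᶜ * epsErr`. In the norm `sup_c 2 ^ c * |·|`, restricted to `c` of the parity
of `n`, that recursion contracts by `7 / 8`, so the two sequences of tails merge
(`abs_tailProb_sub_ideal_le`). The point probabilities of the ideal chain have a closed form
(`idealMass`, `idealTail_sub`), whose limits are the stated products.
-/

open MeasureTheory Filter

noncomputable section

/-! ### Indicators and finite product expectations -/

/-- The indicator of a proposition, as a real number. -/
def ind (P : Prop) : ℝ := open Classical in if P then 1 else 0

theorem ind_true {P : Prop} (h : P) : ind P = 1 := by simp [ind, h]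
theorem ind_false {P : Prop} (h : ¬ P) : ind P = 0 := by simp [ind, h]
theorem ind_nonneg (P : Prop) : 0 ≤ ind P := by unfold ind; split_ifs <;> norm_num
theorem ind_le_one (P : Prop) : ind P ≤ 1 := by unfold ind; split_ifs <;> norm_num
theorem ind_mono {P Q : Prop} (h : P → Q) : ind P ≤ ind Q := by
  by_cases hp : P
  · rw [ind_true hp, ind_true (h hp)]
  · rw [ind_false hp]; exact ind_nonneg Q
theorem ind_and (P Q : Prop) : ind (P ∧ Q) = ind P * ind Q := by
  by_cases hp : P <;> by_cases hq : Q <;> simp [ind, hp, hq]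

section Expectation

variable {F : Type*} [Fintype F] {ι κ : Type*} [Fintype ι] [DecidableEq ι] [Fintype κ]
  [DecidableEq κ]

/-- Expectation of `f` over the finite product space `ι → F` whose coordinates are independent with
common weights `w`. It is meant for `w ≥ 0` with `∑ a, w a = 1`, but the definition imposes
neither. -/
def Ex (w : F → ℝ) (f : (ι → F) → ℝ) : ℝ := ∑ y : ι → F, (∏ i, w (y i)) * f y

theorem Ex_mono {w : F → ℝ} (hw : ∀ a, 0 ≤ w a) {f g : (ι → F) → ℝ} (h : ∀ y, f y ≤ g y) :
    Ex w f ≤ Ex w g :=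
  Finset.sum_le_sum fun y _ =>
    mul_le_mul_of_nonneg_left (h y) (Finset.prod_nonneg fun _ _ => hw _)

theorem Ex_mul_left (w : F → ℝ) (c : ℝ) (f : (ι → F) → ℝ) :
    Ex w (fun y => c * f y) = c * Ex w f := by
  simp only [Ex, Finset.mul_sum]
  exact Finset.sum_congr rfl fun y _ => by ring

theorem Ex_add (w : F → ℝ) (f g : (ι → F) → ℝ) :
    Ex w (fun y => f y + g y) = Ex w f + Ex w g := by
  simp only [Ex, mul_add, Finset.sum_add_distrib]

theorem Ex_sub (w : F → ℝ) (f g : (ι → F) → ℝ) :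
    Ex w (fun y => f y - g y) = Ex w f - Ex w g := by
  simp only [Ex, mul_sub, Finset.sum_sub_distrib]

theorem Ex_sum (w : F → ℝ) {τ : Type*} (s : Finset τ) (f : τ → (ι → F) → ℝ) :
    Ex w (fun y => ∑ t ∈ s, f t y) = ∑ t ∈ s, Ex w (f t) := by
  simp only [Ex, Finset.mul_sum]
  rw [Finset.sum_comm]

theorem Ex_one {w : F → ℝ} (hw1 : ∑ a, w a = 1) : Ex (ι := ι) w (fun _ => 1) = 1 := by
  simp only [Ex, mul_one]
  have := Finset.prod_univ_sum (fun _ : ι => (Finset.univ : Finset F)) (fun _ a => w a)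
  simpa [hw1] using this.symm

theorem Ex_const {w : F → ℝ} (hw1 : ∑ a, w a = 1) (c : ℝ) :
    Ex (ι := ι) w (fun _ => c) = c := by
  have := Ex_mul_left (ι := ι) w c (fun _ => 1)
  simpa [Ex_one hw1] using this

theorem Ex_nonneg {w : F → ℝ} (hw : ∀ a, 0 ≤ w a) {f : (ι → F) → ℝ} (h : ∀ y, 0 ≤ f y) :
    0 ≤ Ex w f :=
  Finset.sum_nonneg fun y _ => mul_nonneg (Finset.prod_nonneg fun _ _ => hw _) (h y)

theorem Ex_abs_le {w : F → ℝ} (hw : ∀ a, 0 ≤ w a) (f : (ι → F) → ℝ) :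
    |Ex w f| ≤ Ex w (fun y => |f y|) := by
  refine (Finset.abs_sum_le_sum_abs _ _).trans (le_of_eq ?_)
  refine Finset.sum_congr rfl fun y _ => ?_
  rw [abs_mul, abs_of_nonneg (Finset.prod_nonneg fun i _ => hw _)]

theorem Ex_equiv (w : F → ℝ) (e : ι ≃ κ) (g : (ι → F) → ℝ) :
    Ex w (fun y : κ → F => g (y ∘ e)) = Ex w g := by
  refine Fintype.sum_equiv (e.arrowCongr (Equiv.refl F)).symm _ _ fun y => ?_
  have : ∏ i, w (y i) = ∏ i, w (y (e i)) := (Equiv.prod_comp e (fun i => w (y i))).symm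
  rw [this]; rfl

/-- Fubini for a product space split into two blocks of coordinates. -/
theorem Ex_sumType (w : F → ℝ) (f : (ι ⊕ κ → F) → ℝ) :
    Ex w f = Ex w fun a : ι → F => Ex w fun b : κ → F => f (Sum.elim a b) := by
  simp only [Ex, Finset.mul_sum]
  rw [← Fintype.sum_prod_type']
  refine Fintype.sum_equiv (Equiv.sumArrowEquivProdArrow ι κ F) _ _ fun y => ?_
  have : Sum.elim (y ∘ Sum.inl) (y ∘ Sum.inr) = y := by ext (i | i) <;> rfl
  simp only [Equiv.sumArrowEquivProdArrow, Equiv.coe_fn_mk, Function.comp_def,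
    Fintype.prod_sum_type]
  simp only [Function.comp_def] at this
  rw [this, mul_assoc]

/-- A function of some of the coordinates only has the expectation computed from those coordinates;
the unused coordinates integrate to one. -/
theorem Ex_comp_injective {w : F → ℝ} (hw1 : ∑ a, w a = 1) {e : ι → κ}
    (he : Function.Injective e) (g : (ι → F) → ℝ) :
    Ex w (fun y : κ → F => g (y ∘ e)) = Ex w g := by
  classical
  let e' : ι ⊕ ↥(Set.range e)ᶜ ≃ κ :=
    ((Equiv.ofInjective e he).sumCongr (Equiv.refl _)).trans (Equiv.Set.sumCompl (Set.range e))
  have h1 : ∀ y : κ → F, y ∘ e = (y ∘ e') ∘ Sum.inl := by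
    intro y; ext i; simp [e']
  simp only [h1]
  rw [Ex_equiv w e' (fun z => g (z ∘ Sum.inl)), Ex_sumType]
  simp only [Sum.elim_comp_inl, Ex_const hw1]

theorem Ex_comm (w : F → ℝ) (f : (ι → F) → (κ → F) → ℝ) :
    (Ex w fun a => Ex w fun b => f a b) = Ex w fun b => Ex w fun a => f a b := by
  simp only [Ex, Finset.mul_sum]
  rw [Finset.sum_comm]
  exact Finset.sum_congr rfl fun y _ => Finset.sum_congr rfl fun z _ => by ring

end Expectation

/-! ### Fourier estimates for a random vector over `ZMod p` -/

section Fourier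

variable {p : ℕ} [Fact p.Prime] {ι : Type*} [Fintype ι] [DecidableEq ι]

/-- Fourier transform of the weights `w` at the frequency `t`. -/
def entryChar (w : ZMod p → ℝ) (t : ZMod p) : ℂ := ∑ a, (w a : ℂ) * ZMod.stdAddChar (t * a)

theorem stdAddChar_eq_one_iff (a : ZMod p) : ZMod.stdAddChar a = (1 : ℂ) ↔ a = 0 := by
  constructor
  · intro h
    apply ZMod.injective_stdAddChar
    rw [h, AddChar.map_zero_eq_one]
  · rintro rfl; exact AddChar.map_zero_eq_one _

theorem norm_stdAddChar (a : ZMod p) : ‖(ZMod.stdAddChar a : ℂ)‖ = 1 := by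
  exact AddChar.norm_apply _ _

theorem stdAddChar_sum {τ : Type*} (s : Finset τ) (f : τ → ZMod p) :
    (ZMod.stdAddChar (∑ i ∈ s, f i) : ℂ) = ∏ i ∈ s, ZMod.stdAddChar (f i) := by
  classical
  induction s using Finset.induction_on with
  | empty => simp [AddChar.map_zero_eq_one]
  | insert a s ha ih =>
    rw [Finset.sum_insert ha, Finset.prod_insert ha, AddChar.map_add_eq_mul, ih]

theorem entryChar_zero {w : ZMod p → ℝ} (hw1 : ∑ a, w a = 1) : entryChar w 0 = 1 := by
  simp [entryChar, AddChar.map_zero_eq_one, ← Complex.ofReal_sum, hw1]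

/-- No residue has full mass, so two residues have positive mass; their terms in the Fourier sum
point in different directions and the triangle inequality is strict. -/
theorem norm_entryChar_lt_one {w : ZMod p → ℝ} (hw : ∀ a, 0 ≤ w a) (hw1 : ∑ a, w a = 1)
    (hlt : ∀ a, w a < 1) {t : ZMod p} (ht : t ≠ 0) : ‖entryChar w t‖ < 1 := by
  obtain ⟨a, ha⟩ : ∃ a, 0 < w a := by
    by_contra! h
    have : ∑ a, w a ≤ 0 := Finset.sum_nonpos fun a _ => h a
    linarith
  obtain ⟨b, hb, hba⟩ : ∃ b, 0 < w b ∧ b ≠ a := by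
    by_contra! h
    have h0 : ∀ b, b ≠ a → w b = 0 := fun b hb =>
      le_antisymm (by by_contra! h'; exact hb (h b h')) (hw b)
    have := Finset.sum_eq_single (s := Finset.univ) a (f := w) (fun b _ hb => h0 b hb) (by simp)
    have := hlt a
    linarith
  have hpair : ‖(w a : ℂ) * ZMod.stdAddChar (t * a) + (w b : ℂ) * ZMod.stdAddChar (t * b)‖
      < w a + w b := by
    have hray : ¬ SameRay ℝ ((w a : ℂ) * ZMod.stdAddChar (t * a))
        ((w b : ℂ) * ZMod.stdAddChar (t * b)) := by
      intro h
      have h2 := h.norm_smul_eq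
      simp only [norm_mul, norm_stdAddChar, Complex.norm_real, Real.norm_eq_abs, abs_of_pos ha,
        abs_of_pos hb, mul_one, Complex.real_smul] at h2
      have hwa : (w a : ℂ) ≠ 0 := by exact_mod_cast ha.ne'
      have hwb : (w b : ℂ) ≠ 0 := by exact_mod_cast hb.ne'
      have h3 : (ZMod.stdAddChar (t * a) : ℂ) = ZMod.stdAddChar (t * b) := by
        have : ((w a : ℂ) * w b) * (ZMod.stdAddChar (t * b)) =
          ((w a : ℂ) * w b) * (ZMod.stdAddChar (t * a) : ℂ) := by linear_combination h2
        exact (mul_left_cancel₀ (mul_ne_zero hwa hwb) this).symm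
      have := ZMod.injective_stdAddChar h3
      exact hba (mul_left_cancel₀ ht this).symm
    have := norm_add_lt_of_not_sameRay hray
    simpa only [norm_mul, norm_stdAddChar, Complex.norm_real, Real.norm_eq_abs, abs_of_pos ha,
        abs_of_pos hb, mul_one] using this
  have hsplit : ∀ {M : Type} [AddCommMonoid M] (f : ZMod p → M),
      ∑ c, f c = (f a + f b) + ∑ c ∈ (Finset.univ.erase a).erase b, f c := by
    intro M _ f
    rw [← Finset.add_sum_erase _ _ (Finset.mem_univ a),
      ← Finset.add_sum_erase _ _ (Finset.mem_erase.2 ⟨hba, Finset.mem_univ b⟩), add_assoc]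
  calc ‖entryChar w t‖ ≤ ‖(w a : ℂ) * ZMod.stdAddChar (t * a) + (w b : ℂ) * ZMod.stdAddChar (t * b)‖
        + ‖∑ c ∈ (Finset.univ.erase a).erase b, (w c : ℂ) * ZMod.stdAddChar (t * c)‖ := by
        rw [entryChar, hsplit]; exact norm_add_le _ _
    _ < (w a + w b) + ∑ c ∈ (Finset.univ.erase a).erase b, w c := by
        refine add_lt_add_of_lt_of_le hpair ((norm_sum_le _ _).trans (le_of_eq ?_))
        refine Finset.sum_congr rfl fun c _ => ?_
        simp [abs_of_nonneg (hw c)]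
    _ = 1 := by rw [← hsplit, hw1]

theorem exists_entryChar_bound {w : ZMod p → ℝ} (hw : ∀ a, 0 ≤ w a) (hw1 : ∑ a, w a = 1)
    (hlt : ∀ a, w a < 1) :
    ∃ ρ : ℝ, 0 < ρ ∧ ρ < 1 ∧ ∀ t : ZMod p, t ≠ 0 → ‖entryChar w t‖ ≤ ρ := by
  obtain ⟨t₀, ht₀, hmax⟩ := Finset.exists_max_image (Finset.univ.filter fun t : ZMod p => t ≠ 0)
    (fun t => ‖entryChar w t‖) ⟨1, by simp⟩
  refine ⟨max ‖entryChar w t₀‖ (1 / 2), by positivity, max_lt ?_ (by norm_num), fun t ht => ?_⟩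
  · exact norm_entryChar_lt_one hw hw1 hlt (by simpa using ht₀)
  · exact le_max_of_le_left (hmax t (by simpa using ht))

theorem sum_weight_char (w : ZMod p → ℝ) (v : ι → ZMod p) :
    ∑ y : ι → ZMod p, ((∏ i, w (y i) : ℝ) : ℂ) * ZMod.stdAddChar (v ⬝ᵥ y) =
      ∏ i, entryChar w (v i) := by
  simp only [entryChar]
  rw [Fintype.prod_sum]
  refine Finset.sum_congr rfl fun y _ => ?_
  rw [Finset.prod_mul_distrib, dotProduct, stdAddChar_sum]
  push_cast; rfl

/-- The characteristic function of a random vector factors over the coordinates, and each nonzero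
coordinate of `v` contributes a factor at most `ρ`. -/
theorem norm_sum_weight_char_le {w : ZMod p → ℝ} (hw1 : ∑ a, w a = 1) {ρ : ℝ}
    (hρ : ∀ t : ZMod p, t ≠ 0 → ‖entryChar w t‖ ≤ ρ) (v : ι → ZMod p) :
    ‖∑ y : ι → ZMod p, ((∏ i, w (y i) : ℝ) : ℂ) * ZMod.stdAddChar (v ⬝ᵥ y)‖ ≤
      ρ ^ hammingNorm v := by
  rw [sum_weight_char, norm_prod]
  calc ∏ i, ‖entryChar w (v i)‖ ≤ ∏ i, (if v i ≠ 0 then ρ else 1) := by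
        refine Finset.prod_le_prod (fun i _ => norm_nonneg _) fun i _ => ?_
        split_ifs with h
        · exact hρ _ h
        · rw [not_not.1 h, entryChar_zero hw1]; simp
    _ = ρ ^ hammingNorm v := by
        rw [Finset.prod_ite]; simp [hammingNorm]

/-- Fourier inversion for the probability that a random vector is orthogonal to `V`. -/
theorem Ex_perp (w : ZMod p → ℝ) (V : Submodule (ZMod p) (ι → ZMod p)) [Fintype V] :
    ((Fintype.card V : ℝ) * Ex w (fun y => ind (∀ v ∈ V, v ⬝ᵥ y = 0)) : ℝ) =
      ∑ v : V, ∑ y : ι → ZMod p,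
        ((∏ i, w (y i) : ℝ) : ℂ) * ZMod.stdAddChar ((v : ι → ZMod p) ⬝ᵥ y) := by
  rw [Finset.sum_comm]
  push_cast [Ex]
  rw [Finset.mul_sum]
  refine Finset.sum_congr rfl fun y _ => ?_
  rw [← Finset.mul_sum]
  let χ : AddChar V ℂ :=
    { toFun := fun v => ZMod.stdAddChar ((v : ι → ZMod p) ⬝ᵥ y)
      map_zero_eq_one' := by simp [AddChar.map_zero_eq_one]
      map_add_eq_mul' := fun a b => by simp [add_dotProduct, AddChar.map_add_eq_mul] }
  have hχ : ∑ v : V, (ZMod.stdAddChar ((v : ι → ZMod p) ⬝ᵥ y) : ℂ) =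
      (Fintype.card V : ℂ) * (ind (∀ v ∈ V, v ⬝ᵥ y = 0) : ℝ) := by
    have := AddChar.sum_eq_ite χ
    change ∑ v : V, χ v = _
    rw [this]
    by_cases h : ∀ v ∈ V, v ⬝ᵥ y = 0
    · have h0 : χ = 0 := by
        ext v
        change (ZMod.stdAddChar ((v : ι → ZMod p) ⬝ᵥ y) : ℂ) = 1
        rw [h v v.2, AddChar.map_zero_eq_one]
      rw [if_pos h0, ind_true h]; simp
    · have h0 : χ ≠ 0 := by
        intro h0
        refine h fun v hv => ?_
        have h1 : χ ⟨v, hv⟩ = 1 := by rw [h0]; rfl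
        exact (stdAddChar_eq_one_iff _).1 h1
      rw [if_neg h0, ind_false h]; simp
  rw [hχ]; ring

/-- A random vector is orthogonal to `V` with probability `p ^ (-dim V)`, up to a relative error
controlled by the nonzero vectors of `V` of small support. -/
theorem abs_Ex_perp_sub_le {w : ZMod p → ℝ} (hw1 : ∑ a, w a = 1) {ρ : ℝ}
    (hρ : ∀ t : ZMod p, t ≠ 0 → ‖entryChar w t‖ ≤ ρ)
    (V : Submodule (ZMod p) (ι → ZMod p)) :
    |Ex w (fun y => ind (∀ v ∈ V, v ⬝ᵥ y = 0)) -
        ((p : ℝ)⁻¹) ^ Module.finrank (ZMod p) V| ≤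
      ((p : ℝ)⁻¹) ^ Module.finrank (ZMod p) V *
        ∑ v : ι → ZMod p, ind (v ∈ V ∧ v ≠ 0) * ρ ^ hammingNorm v := by
  classical
  have hcard : (Fintype.card V : ℝ) = (p : ℝ) ^ Module.finrank (ZMod p) V := by
    rw [Module.card_eq_pow_finrank (K := ZMod p), ZMod.card]; push_cast; rfl
  have hp : 0 < (p : ℝ) := by exact_mod_cast (Fact.out : p.Prime).pos
  set q := Ex w (fun y => ind (∀ v ∈ V, v ⬝ᵥ y = 0)) with hq
  set N : ℝ := (p : ℝ) ^ Module.finrank (ZMod p) V with hN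
  have hNpos : 0 < N := by positivity
  have key := Ex_perp w V
  rw [hcard, ← Finset.add_sum_erase _ _ (Finset.mem_univ (0 : V)), sum_weight_char] at key
  have h0 : ∏ i, entryChar w (((0 : V) : ι → ZMod p) i) = 1 := by
    simp [entryChar_zero hw1]
  rw [h0, ← sub_eq_iff_eq_add'] at key
  have hb : |N * q - 1| ≤ ∑ v : ι → ZMod p, ind (v ∈ V ∧ v ≠ 0) * ρ ^ hammingNorm v := by
    have h1 : |N * q - 1| = ‖(((N * q : ℝ) : ℂ) - 1)‖ := by
      rw [← Complex.ofReal_one, ← Complex.ofReal_sub, Complex.norm_real, Real.norm_eq_abs]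
    rw [h1, key]
    refine (norm_sum_le _ _).trans ?_
    calc _ ≤ ∑ v ∈ (Finset.univ : Finset V).erase 0, ρ ^ hammingNorm (v : ι → ZMod p) :=
          Finset.sum_le_sum fun v _ => norm_sum_weight_char_le hw1 hρ _
      _ = ∑ v : V, ind ((v : ι → ZMod p) ≠ 0) * ρ ^ hammingNorm (v : ι → ZMod p) := by
          rw [← Finset.add_sum_erase Finset.univ _ (Finset.mem_univ (0 : V))]
          rw [ind_false (by simp), zero_mul, zero_add]
          refine Finset.sum_congr rfl fun v hv => ?_
          rw [ind_true (by simpa using hv), one_mul]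
      _ = _ := by
          refine (Finset.sum_subtype (Finset.univ.filter fun v => v ∈ V) (by simp)
            (fun v => ind (v ≠ 0) * ρ ^ hammingNorm v)).symm.trans ?_
          rw [Finset.sum_filter]
          refine Finset.sum_congr rfl fun v _ => ?_
          by_cases hv : v ∈ V
          · simp [ind, hv]
          · simp [ind, hv]
  have e1 : q - N⁻¹ = N⁻¹ * (N * q - 1) := by field_simp
  rw [inv_pow, e1, abs_mul, abs_of_pos (inv_pos.2 hNpos)]
  exact mul_le_mul_of_nonneg_left hb (inv_pos.2 hNpos).le

/-- Upper bound for the probability that `v ⬝ᵥ y` takes a prescribed value, when `v` has `k` nonzero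
coordinates; see `Ex_dot_le`. -/
def kap (p : ℕ) (ρ : ℝ) (k : ℕ) : ℝ := (1 + (p - 1) * ρ ^ k) / p

theorem Ex_dot_le {w : ZMod p → ℝ} (hw1 : ∑ a, w a = 1) {ρ : ℝ}
    (hρ : ∀ t : ZMod p, t ≠ 0 → ‖entryChar w t‖ ≤ ρ) (v : ι → ZMod p) (b : ZMod p) :
    Ex w (fun y => ind (v ⬝ᵥ y = b)) ≤ kap p ρ (hammingNorm v) := by
  have hp : 0 < (p : ℝ) := by exact_mod_cast (Fact.out : p.Prime).pos
  have key : (((p : ℝ) * Ex w (fun y => ind (v ⬝ᵥ y = b)) : ℝ) : ℂ) =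
      ∑ t : ZMod p, ZMod.stdAddChar (-(t * b)) * ∑ y : ι → ZMod p,
        ((∏ i, w (y i) : ℝ) : ℂ) * ZMod.stdAddChar ((t • v) ⬝ᵥ y) := by
    simp only [Finset.mul_sum]
    rw [Finset.sum_comm]
    push_cast [Ex]
    rw [Finset.mul_sum]
    refine Finset.sum_congr rfl fun y _ => ?_
    have h1 := AddChar.sum_mulShift (ψ := ZMod.stdAddChar (N := p)) (v ⬝ᵥ y - b)
      (ZMod.isPrimitive_stdAddChar p)
    have h2 : ∀ t : ZMod p, (ZMod.stdAddChar (-(t * b)) : ℂ) *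
        ((∏ i, (w (y i) : ℂ)) * ZMod.stdAddChar ((t • v) ⬝ᵥ y)) =
        (∏ i, (w (y i) : ℂ)) * ZMod.stdAddChar (t * (v ⬝ᵥ y - b)) := by
      intro t
      rw [mul_left_comm, ← AddChar.map_add_eq_mul, smul_dotProduct, smul_eq_mul]
      congr 2; ring
    simp only [h2]
    rw [← Finset.mul_sum, h1]
    by_cases h : v ⬝ᵥ y = b
    · rw [ind_true h, if_pos (by rw [h, sub_self])]; simp [ZMod.card]; ring
    · rw [ind_false h, if_neg (sub_ne_zero.2 h)]; simp
  have hEx : (p : ℝ) * Ex w (fun y => ind (v ⬝ᵥ y = b)) ≤ 1 + (p - 1) * ρ ^ hammingNorm v := by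
    calc (p : ℝ) * Ex w (fun y => ind (v ⬝ᵥ y = b))
        ≤ ‖(((p : ℝ) * Ex w (fun y => ind (v ⬝ᵥ y = b)) : ℝ) : ℂ)‖ := by
          rw [Complex.norm_real]; exact le_abs_self _
      _ ≤ ∑ t : ZMod p, ρ ^ hammingNorm (t • v) := by
          rw [key]
          refine (norm_sum_le _ _).trans (Finset.sum_le_sum fun t _ => ?_)
          rw [norm_mul, norm_stdAddChar, one_mul]
          exact norm_sum_weight_char_le hw1 hρ _
      _ = 1 + ∑ t ∈ (Finset.univ : Finset (ZMod p)).erase 0, ρ ^ hammingNorm v := by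
          rw [← Finset.add_sum_erase _ _ (Finset.mem_univ (0 : ZMod p))]
          congr 1
          · simp
          · refine Finset.sum_congr rfl fun t ht => ?_
            have ht0 : t ≠ 0 := by simpa using ht
            congr 1
            simp [hammingNorm, ht0]
      _ = _ := by
          rw [Finset.sum_const, Finset.card_erase_of_mem (Finset.mem_univ _), Finset.card_univ,
            ZMod.card, nsmul_eq_mul, Nat.cast_sub (Fact.out : p.Prime).one_le]
          simp
  rw [kap, le_div_iff₀ hp]
  linarith

end Fourier

/-! ### Skew-symmetric matrices and removal of a row and column -/

section Skew

/-- The skew-symmetric matrix whose entries above the diagonal are read off from `y`. The values of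
`y` at `(i, j)` with `j ≤ i` are ignored, as in `skewMatrix`. -/
def skewOf {R : Type*} [Ring R] (n : ℕ) (y : Fin n × Fin n → R) : Matrix (Fin n) (Fin n) R :=
  Matrix.of fun i j => if i < j then y (i, j) else if j < i then -y (j, i) else 0

variable {R : Type*} [CommRing R]

theorem skewOf_diag {n : ℕ} (y : Fin n × Fin n → R) (i : Fin n) : skewOf n y i i = 0 := by
  simp [skewOf]

theorem skewOf_swap {n : ℕ} (y : Fin n × Fin n → R) (i j : Fin n) :
    skewOf n y j i = - skewOf n y i j := by
  simp only [skewOf, Matrix.of_apply]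
  rcases lt_trichotomy i j with h | h | h
  · simp [h, h.not_gt]
  · simp [h]
  · simp [h, h.not_gt]

/-- Positions of the data of an `(n + 1) × (n + 1)` skew-symmetric matrix relative to index `i`:
`Sum.inl` gives those of the minor with row and column `i` removed, and `Sum.inr j` the position
above the diagonal that stores the entry linking `i` and `i.succAbove j`. -/
def peel {n : ℕ} (i : Fin (n + 1)) : (Fin n × Fin n) ⊕ Fin n → Fin (n + 1) × Fin (n + 1)
  | Sum.inl ab => (i.succAbove ab.1, i.succAbove ab.2)
  | Sum.inr j => if i < i.succAbove j then (i, i.succAbove j) else (i.succAbove j, i)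

theorem peel_injective {n : ℕ} (i : Fin (n + 1)) : Function.Injective (peel i) := by
  rintro (⟨a, b⟩ | j) (⟨a', b'⟩ | j') h
  · simpa [peel] using h
  · simp only [peel] at h
    split_ifs at h
    · exact absurd (Prod.ext_iff.1 h).1 (Fin.succAbove_ne i a)
    · exact absurd (Prod.ext_iff.1 h).2 (Fin.succAbove_ne i b)
  · simp only [peel] at h
    split_ifs at h
    · exact absurd (Prod.ext_iff.1 h).1.symm (Fin.succAbove_ne i a')
    · exact absurd (Prod.ext_iff.1 h).2.symm (Fin.succAbove_ne i b')
  · simp only [peel] at h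
    have h1 := Fin.succAbove_ne i j
    have h2 := Fin.succAbove_ne i j'
    have : i.succAbove j = i.succAbove j' := by
      split_ifs at h
      · exact (Prod.ext_iff.1 h).2
      · exact absurd (Prod.ext_iff.1 h).1.symm h2
      · exact absurd (Prod.ext_iff.1 h).1 h1
      · exact (Prod.ext_iff.1 h).1
    rw [Fin.succAbove_right_injective this]

/-- The sign with which the entry stored at `peel i (Sum.inr j)` occurs in row `i`. -/
def peelSign {n : ℕ} (R : Type*) [Ring R] (i : Fin (n + 1)) (j : Fin n) : R :=
  if i < i.succAbove j then 1 else -1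

theorem skewOf_succAbove {n : ℕ} (i : Fin (n + 1)) (y : Fin (n + 1) × Fin (n + 1) → R)
    (a b : Fin n) :
    skewOf (n + 1) y (i.succAbove a) (i.succAbove b) =
      skewOf n ((y ∘ peel i) ∘ Sum.inl) a b := by
  simp [skewOf, peel, (Fin.strictMono_succAbove i).lt_iff_lt]

theorem skewOf_row {n : ℕ} (i : Fin (n + 1)) (y : Fin (n + 1) × Fin (n + 1) → R) (j : Fin n) :
    skewOf (n + 1) y i (i.succAbove j) =
      peelSign R i j * ((y ∘ peel i) ∘ Sum.inr) j := by
  have h1 := Fin.succAbove_ne i j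
  simp only [skewOf, peel, peelSign, Matrix.of_apply, Function.comp]
  split_ifs with h h'
  · simp
  · simp
  · exact absurd (le_antisymm (not_lt.1 h) (not_lt.1 h')) h1

theorem skewOf_mulVec_row {n : ℕ} (i : Fin (n + 1)) (y : Fin (n + 1) × Fin (n + 1) → R)
    (v : Fin (n + 1) → R) :
    (skewOf (n + 1) y).mulVec v i =
      (fun j => peelSign R i j * v (i.succAbove j)) ⬝ᵥ ((y ∘ peel i) ∘ Sum.inr) := by
  rw [Matrix.mulVec, dotProduct, Fin.sum_univ_succAbove _ i, skewOf_diag, zero_mul, zero_add,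
    dotProduct]
  refine Finset.sum_congr rfl fun j _ => ?_
  rw [skewOf_row]; ring

theorem skewOf_mulVec_succAbove {n : ℕ} (i : Fin (n + 1)) (y : Fin (n + 1) × Fin (n + 1) → R)
    (v : Fin (n + 1) → R) (a : Fin n) :
    (skewOf (n + 1) y).mulVec v (i.succAbove a) =
      (skewOf n ((y ∘ peel i) ∘ Sum.inl)).mulVec (fun j => v (i.succAbove j)) a -
        peelSign R i a * ((y ∘ peel i) ∘ Sum.inr) a * v i := by
  rw [Matrix.mulVec, dotProduct, Fin.sum_univ_succAbove _ i, skewOf_swap _ i, skewOf_row,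
    Matrix.mulVec, dotProduct]
  simp only [skewOf_succAbove]
  ring

theorem dot_skew_self {n : ℕ} (y : Fin n × Fin n → R) (u : Fin n → R) :
    u ⬝ᵥ (skewOf n y).mulVec u = 0 := by
  simp only [Matrix.mulVec, dotProduct, Finset.mul_sum]
  rw [← Fintype.sum_prod_type']
  refine Finset.sum_involution (fun a _ => a.swap) ?_ ?_ (by simp) (by simp)
  · rintro ⟨a, b⟩ _
    simp only [Prod.swap]
    rw [skewOf_swap y a b]; ring
  · rintro ⟨a, b⟩ _ h hab
    obtain rfl : b = a := (Prod.ext_iff.1 hab).1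
    simp [skewOf_diag] at h

theorem dot_skew_comm {n : ℕ} (y : Fin n × Fin n → R) (u v : Fin n → R) :
    u ⬝ᵥ (skewOf n y).mulVec v = - (v ⬝ᵥ (skewOf n y).mulVec u) := by
  have h := dot_skew_self y (u + v)
  rw [Matrix.mulVec_add, add_dotProduct, dotProduct_add, dotProduct_add, dot_skew_self,
    dot_skew_self] at h
  linear_combination h

end Skew

/-! ### Corank under bordering -/

section Corank

variable {K : Type*} [Field K]

/-- The dimension of the kernel of a square matrix. -/
def corank {n : ℕ} (A : Matrix (Fin n) (Fin n) K) : ℕ :=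
  Module.finrank K (LinearMap.ker A.mulVecLin)

theorem rank_add_corank {n : ℕ} (A : Matrix (Fin n) (Fin n) K) : A.rank + corank A = n := by
  have := LinearMap.finrank_range_add_finrank_ker A.mulVecLin
  simpa [Matrix.rank, corank] using this

/-- For a skew-symmetric matrix the range is the orthogonal complement of the kernel. -/
theorem exists_skew_preimage {n : ℕ} (y : Fin n × Fin n → K) (x : Fin n → K)
    (h : ∀ v, (skewOf n y).mulVec v = 0 → v ⬝ᵥ x = 0) : ∃ u, (skewOf n y).mulVec u = x := by
  let g : Module.Dual K (Fin n → K) :=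
    { toFun := fun v => v ⬝ᵥ x
      map_add' := fun a b => add_dotProduct a b x
      map_smul' := fun a b => by simp [smul_dotProduct] }
  have hg : g ∈ (LinearMap.ker (skewOf n y).mulVecLin).dualAnnihilator := by
    rw [Submodule.mem_dualAnnihilator]
    intro v hv
    exact h v (by simpa using hv)
  rw [← LinearMap.range_dualMap_eq_dualAnnihilator_ker] at hg
  obtain ⟨f, hf⟩ := hg
  let u : Fin n → K := fun i => f (Pi.single i 1)
  have hu : ∀ v, f v = u ⬝ᵥ v := by
    intro v
    conv_lhs => rw [pi_eq_sum_univ' v]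
    rw [map_sum]
    refine Finset.sum_congr rfl fun i _ => ?_
    rw [map_smul, smul_eq_mul, mul_comm]
  -- the sign compensates for the skew-symmetry of the matrix
  refine ⟨-u, ?_⟩
  refine dotProduct_eq _ _ fun v => ?_
  have h1 : f ((skewOf n y).mulVec v) = v ⬝ᵥ x := congrArg (fun q => q v) hf
  rw [hu, dot_skew_comm] at h1
  rw [Matrix.mulVec_neg, neg_dotProduct, dotProduct_comm, dotProduct_comm x, h1]

variable {n : ℕ} (y : Fin (n + 1) × Fin (n + 1) → K)

/-- The kernel of a bordered matrix, described through the minor and the bordering vector. -/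
theorem mem_ker_skew_succ (z : Fin (n + 1) → K) :
    (skewOf (n + 1) y).mulVec z = 0 ↔
      Fin.tail z ⬝ᵥ ((y ∘ peel 0) ∘ Sum.inr) = 0 ∧
      (skewOf n ((y ∘ peel 0) ∘ Sum.inl)).mulVec (Fin.tail z) =
        z 0 • ((y ∘ peel 0) ∘ Sum.inr) := by
  have hs : ∀ j : Fin n, peelSign K (0 : Fin (n + 1)) j = 1 := fun j => by simp [peelSign]
  have h0 := skewOf_mulVec_row 0 y z
  have h1 := skewOf_mulVec_succAbove 0 y z
  simp only [hs, one_mul, Fin.succAbove_zero] at h0 h1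
  constructor
  · intro h
    refine ⟨?_, ?_⟩
    · rw [h] at h0; exact h0.symm
    · ext j
      have := h1 j
      rw [h] at this
      simp only [Pi.zero_apply] at this
      rw [Pi.smul_apply, smul_eq_mul, mul_comm]
      exact sub_eq_zero.1 this.symm
  · rintro ⟨ha, hb⟩
    ext j
    refine Fin.cases ?_ (fun j => ?_) j
    · rw [h0]; exact ha
    · rw [h1 j]
      have := congrFun hb j
      rw [Pi.smul_apply, smul_eq_mul, mul_comm] at this
      exact sub_eq_zero.2 this

/-- If the bordering vector `x` is orthogonal to the kernel of the minor `A`, then `x = A u`, and the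
kernel of the bordered matrix is spanned by `(0, ker A)` and `(1, u)`; skew-symmetry gives
`u ⬝ᵥ x = 0`. -/
theorem corank_succ_of_perp
    (h : ∀ v, (skewOf n ((y ∘ peel 0) ∘ Sum.inl)).mulVec v = 0 →
      v ⬝ᵥ ((y ∘ peel 0) ∘ Sum.inr) = 0) :
    corank (skewOf (n + 1) y) = corank (skewOf n ((y ∘ peel 0) ∘ Sum.inl)) + 1 := by
  obtain ⟨u, hu⟩ := exists_skew_preimage _ _ h
  set A := skewOf n ((y ∘ peel 0) ∘ Sum.inl) with hA
  set x : Fin n → K := (y ∘ peel 0) ∘ Sum.inr with hx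
  let f : (LinearMap.ker A.mulVecLin × K) →ₗ[K] (Fin (n + 1) → K) :=
    { toFun := fun q => Fin.cons q.2 ((q.1 : Fin n → K) + q.2 • u)
      map_add' := fun a b => by
        ext j; refine Fin.cases ?_ (fun j => ?_) j <;> simp; ring
      map_smul' := fun a b => by
        ext j; refine Fin.cases ?_ (fun j => ?_) j <;> simp; ring }
  have hinj : Function.Injective f := by
    rintro ⟨⟨a, ha⟩, s⟩ ⟨⟨b, hb⟩, t⟩ hab
    obtain ⟨h1, h2⟩ := Fin.cons_inj (α := fun _ => K).1 hab
    simp only at h1 h2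
    subst h1
    simpa using h2
  have hrange : LinearMap.range f = LinearMap.ker (skewOf (n + 1) y).mulVecLin := by
    ext z
    rw [LinearMap.mem_range, LinearMap.mem_ker, Matrix.mulVecLin_apply, mem_ker_skew_succ]
    constructor
    · rintro ⟨⟨⟨a, ha⟩, s⟩, rfl⟩
      have ha' : A.mulVec a = 0 := by simpa using ha
      simp only [f, LinearMap.coe_mk, AddHom.coe_mk, Fin.tail_cons, Fin.cons_zero]
      refine ⟨?_, ?_⟩
      · rw [add_dotProduct, smul_dotProduct, ← hx, h a ha', ← hu, hA, dot_skew_self]; simp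
      · rw [Matrix.mulVec_add, Matrix.mulVec_smul, ← hA, ha', hu, zero_add]
    · rintro ⟨h1, h2⟩
      refine ⟨⟨⟨Fin.tail z - z 0 • u, ?_⟩, z 0⟩, ?_⟩
      · rw [LinearMap.mem_ker, Matrix.mulVecLin_apply, Matrix.mulVec_sub, Matrix.mulVec_smul, hu,
          hA, h2, sub_self]
      · simp [f]
  have := LinearMap.finrank_range_of_inj hinj
  rw [hrange, Module.finrank_prod, Module.finrank_self] at this
  exact this

/-- If the bordering vector `x` is not orthogonal to the kernel of the minor `A`, then `x` is not in the
range of `A`, and the kernel of the bordered matrix is `(0, ker A ∩ xᗮ)`. -/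
theorem corank_succ_of_not_perp
    (h : ¬ ∀ v, (skewOf n ((y ∘ peel 0) ∘ Sum.inl)).mulVec v = 0 →
      v ⬝ᵥ ((y ∘ peel 0) ∘ Sum.inr) = 0) :
    corank (skewOf (n + 1) y) + 1 = corank (skewOf n ((y ∘ peel 0) ∘ Sum.inl)) := by
  set A := skewOf n ((y ∘ peel 0) ∘ Sum.inl) with hA
  set x : Fin n → K := (y ∘ peel 0) ∘ Sum.inr with hx
  have hx0 : ∀ (s : K) v, A.mulVec v = s • x → s = 0 := by
    intro s v hv
    by_contra hs
    refine h fun k hk => ?_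
    have h1 := dot_skew_comm ((y ∘ peel 0) ∘ Sum.inl) k v
    rw [← hA, hv, hk, dotProduct_smul, dotProduct_zero, neg_zero, smul_eq_mul] at h1
    exact (mul_eq_zero.1 h1).resolve_left hs
  push Not at h
  obtain ⟨k, hk, hkx⟩ := h
  let g : LinearMap.ker A.mulVecLin →ₗ[K] K :=
    { toFun := fun v => (v : Fin n → K) ⬝ᵥ x
      map_add' := fun a b => add_dotProduct _ _ x
      map_smul' := fun a b => by simp [smul_dotProduct] }
  have hg : LinearMap.range g = ⊤ := by
    rw [LinearMap.range_eq_top]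
    apply LinearMap.surjective
    intro h0
    exact hkx (congrArg (fun q => q ⟨k, by simpa using hk⟩) h0)
  have hdim := LinearMap.finrank_range_add_finrank_ker g
  rw [hg, finrank_top, Module.finrank_self] at hdim
  let f : LinearMap.ker g →ₗ[K] (Fin (n + 1) → K) :=
    { toFun := fun q => Fin.cons 0 (((q : LinearMap.ker A.mulVecLin) : Fin n → K))
      map_add' := fun a b => by
        ext j; refine Fin.cases ?_ (fun j => ?_) j <;> simp
      map_smul' := fun a b => by
        ext j; refine Fin.cases ?_ (fun j => ?_) j <;> simp }
  have hinj : Function.Injective f := by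
    intro a b hab
    obtain ⟨_, h2⟩ := Fin.cons_inj (α := fun _ => K).1 hab
    exact Subtype.ext (Subtype.ext h2)
  have hrange : LinearMap.range f = LinearMap.ker (skewOf (n + 1) y).mulVecLin := by
    ext z
    rw [LinearMap.mem_range, LinearMap.mem_ker, Matrix.mulVecLin_apply, mem_ker_skew_succ]
    constructor
    · rintro ⟨⟨⟨a, ha⟩, hb⟩, rfl⟩
      have ha' : A.mulVec a = 0 := by simpa using ha
      simp only [f, LinearMap.coe_mk, AddHom.coe_mk, Fin.tail_cons, Fin.cons_zero]
      exact ⟨hb, by rw [← hA, ha', zero_smul]⟩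
    · rintro ⟨h1, h2⟩
      have hz := hx0 _ _ h2
      rw [hz, zero_smul] at h2
      refine ⟨⟨⟨Fin.tail z, by simpa using h2⟩, h1⟩, ?_⟩
      have := Fin.cons_self_tail z
      rw [hz] at this
      exact this
  have := LinearMap.finrank_range_of_inj hinj
  rw [hrange] at this
  unfold corank
  omega

theorem corank_parity : ∀ (n : ℕ) (y : Fin n × Fin n → K), corank (skewOf n y) % 2 = n % 2
  | 0, y => by
    have := rank_add_corank (skewOf 0 y)
    omega
  | n + 1, y => by
    have ih := corank_parity n ((y ∘ peel 0) ∘ Sum.inl)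
    by_cases h : ∀ v, (skewOf n ((y ∘ peel 0) ∘ Sum.inl)).mulVec v = 0 →
      v ⬝ᵥ ((y ∘ peel 0) ∘ Sum.inr) = 0
    · have := corank_succ_of_perp y h
      omega
    · have := corank_succ_of_not_perp y h
      omega

end Corank

/-! ### Bounds for the probability that a fixed vector is in the kernel -/

section Kap

variable {p : ℕ} {ρ : ℝ}

theorem kap_nonneg (hp : 2 ≤ p) (hρ0 : 0 < ρ) (k : ℕ) : 0 ≤ kap p ρ k := by
  have : (2 : ℝ) ≤ p := by exact_mod_cast hp
  have : 0 ≤ ((p : ℝ) - 1) * ρ ^ k := mul_nonneg (by linarith) (by positivity)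
  unfold kap; positivity

theorem kap_zero (hp : 2 ≤ p) : kap p ρ 0 = 1 := by
  have : (2 : ℝ) ≤ p := by exact_mod_cast hp
  unfold kap; field_simp; ring

theorem kap_le_one' (hp : 2 ≤ p) (hρ0 : 0 < ρ) (hρ1 : ρ < 1) {k : ℕ} (hk : 1 ≤ k) :
    kap p ρ k ≤ kap p ρ 1 := by
  have h2 : (2 : ℝ) ≤ p := by exact_mod_cast hp
  unfold kap
  have : ρ ^ k ≤ ρ ^ 1 := pow_le_pow_of_le_one hρ0.le hρ1.le hk
  have := mul_le_mul_of_nonneg_left this (show (0 : ℝ) ≤ p - 1 by linarith)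
  gcongr

theorem kap_one_pos (hp : 2 ≤ p) (hρ0 : 0 < ρ) : 0 < kap p ρ 1 := by
  have : (2 : ℝ) ≤ p := by exact_mod_cast hp
  have : 0 ≤ ((p : ℝ) - 1) * ρ ^ 1 := mul_nonneg (by linarith) (by positivity)
  unfold kap; positivity

theorem kap_one_lt_one (hp : 2 ≤ p) (hρ1 : ρ < 1) : kap p ρ 1 < 1 := by
  have : (2 : ℝ) ≤ p := by exact_mod_cast hp
  unfold kap
  rw [div_lt_one (by linarith)]
  nlinarith

theorem kap_le_exp (hp : 2 ≤ p) (hρ0 : 0 < ρ) (k : ℕ) :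
    kap p ρ k ≤ (p : ℝ)⁻¹ * Real.exp (p * ρ ^ k) := by
  have h2 : (2 : ℝ) ≤ p := by exact_mod_cast hp
  have h3 : 0 < ρ ^ k := by positivity
  have := Real.add_one_le_exp (p * ρ ^ k)
  unfold kap
  rw [div_eq_inv_mul]
  gcongr
  nlinarith

/-- Bound for `P(A v = b)` when the vector `v` has `k` nonzero coordinates out of `n`. Zero coordinates
are removed first, each at a cost of `kap p ρ k`; the nonzero ones then contribute `kap p ρ j` for
`j = k - 1, …, 0`. -/
def concBound (p : ℕ) (ρ : ℝ) (n k : ℕ) : ℝ :=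
  kap p ρ k ^ (n - k) * ∏ j ∈ Finset.range k, kap p ρ j

/-- Bound used for vectors of small support. -/
theorem concBound_le_one (hp : 2 ≤ p) (hρ0 : 0 < ρ) (hρ1 : ρ < 1) {n k : ℕ} (hk : 1 ≤ k)
    (hkn : k ≤ n) : concBound p ρ n k ≤ kap p ρ 1 ^ (n - 1) := by
  obtain ⟨k, rfl⟩ := Nat.exists_eq_add_of_le' hk
  have h1 : ∏ j ∈ Finset.range (k + 1), kap p ρ j ≤ kap p ρ 1 ^ k := by
    rw [Finset.prod_range_succ', kap_zero hp, mul_one]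
    calc ∏ j ∈ Finset.range k, kap p ρ (j + 1) ≤ ∏ j ∈ Finset.range k, kap p ρ 1 :=
          Finset.prod_le_prod (fun _ _ => kap_nonneg hp hρ0 _)
            fun j _ => kap_le_one' hp hρ0 hρ1 (by omega)
      _ = _ := by simp
  calc concBound p ρ n (k + 1) ≤ kap p ρ 1 ^ (n - (k + 1)) * kap p ρ 1 ^ k := by
        unfold concBound
        gcongr
        · exact Finset.prod_nonneg fun _ _ => kap_nonneg hp hρ0 _
        · exact pow_nonneg (kap_nonneg hp hρ0 _) _
        · exact kap_nonneg hp hρ0 _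
        · exact kap_le_one' hp hρ0 hρ1 hk
    _ = _ := by rw [← pow_add]; congr 1; omega

/-- Bound used for vectors with at least `m` nonzero coordinates: essentially `p ^ (-n)`. -/
theorem concBound_le_exp (hp : 2 ≤ p) (hρ0 : 0 < ρ) (hρ1 : ρ < 1) {n k m : ℕ} (hmk : m ≤ k)
    (hkn : k ≤ n) :
    concBound p ρ n k ≤
      ((p : ℝ)⁻¹) ^ n * (Real.exp (n * (p * ρ ^ m)) * Real.exp (p * (1 - ρ)⁻¹)) := by
  have h2 : (0 : ℝ) < p := by exact_mod_cast (by omega : 0 < p)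
  have h1 : ∏ j ∈ Finset.range k, kap p ρ j ≤ ((p : ℝ)⁻¹) ^ k * Real.exp (p * (1 - ρ)⁻¹) := by
    calc ∏ j ∈ Finset.range k, kap p ρ j
        ≤ ∏ j ∈ Finset.range k, ((p : ℝ)⁻¹ * Real.exp (p * ρ ^ j)) :=
          Finset.prod_le_prod (fun _ _ => kap_nonneg hp hρ0 _) fun j _ => kap_le_exp hp hρ0 j
      _ = ((p : ℝ)⁻¹) ^ k * Real.exp (p * ∑ j ∈ Finset.range k, ρ ^ j) := by
          rw [Finset.prod_mul_distrib, ← Real.exp_sum, Finset.mul_sum]; simp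
      _ ≤ _ := by
          gcongr
          rw [← tsum_geometric_of_lt_one hρ0.le hρ1]
          exact (summable_geometric_of_lt_one hρ0.le hρ1).sum_le_tsum _ fun _ _ => by positivity
  have h3 : kap p ρ k ^ (n - k) ≤ ((p : ℝ)⁻¹) ^ (n - k) * Real.exp (n * (p * ρ ^ m)) := by
    calc kap p ρ k ^ (n - k) ≤ ((p : ℝ)⁻¹ * Real.exp (p * ρ ^ m)) ^ (n - k) := by
          refine pow_le_pow_left₀ (kap_nonneg hp hρ0 _) ((kap_le_exp hp hρ0 k).trans ?_) _
          have : ρ ^ k ≤ ρ ^ m := pow_le_pow_of_le_one hρ0.le hρ1.le hmk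
          gcongr
      _ = ((p : ℝ)⁻¹) ^ (n - k) * Real.exp ((n - k : ℕ) * (p * ρ ^ m)) := by
          rw [mul_pow, ← Real.exp_nat_mul]
      _ ≤ _ := by
          have : ((n - k : ℕ) : ℝ) ≤ n := by exact_mod_cast Nat.sub_le _ _
          gcongr
  calc concBound p ρ n k
      ≤ (((p : ℝ)⁻¹) ^ (n - k) * Real.exp (n * (p * ρ ^ m))) *
        (((p : ℝ)⁻¹) ^ k * Real.exp (p * (1 - ρ)⁻¹)) := by
        unfold concBound
        gcongr
        exact Finset.prod_nonneg fun _ _ => kap_nonneg hp hρ0 _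
    _ = (((p : ℝ)⁻¹) ^ (n - k) * ((p : ℝ)⁻¹) ^ k) *
        (Real.exp (n * (p * ρ ^ m)) * Real.exp (p * (1 - ρ)⁻¹)) := by ring
    _ = _ := by rw [← pow_add, Nat.sub_add_cancel hkn]

end Kap

/-! ### The mean Fourier error tends to zero -/

section Concentration

variable {p : ℕ} [Fact p.Prime] {w : ZMod p → ℝ} {ρ : ℝ}

/-- Removing row and column `i`: conditionally on row `i`, the remaining equations are a system of the
same kind for the minor, with a shifted right-hand side, while row `i` gives one linear equation. -/
theorem Ex_peel_le (hw : ∀ a, 0 ≤ w a) (hw1 : ∑ a, w a = 1)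
    (hρ : ∀ t : ZMod p, t ≠ 0 → ‖entryChar w t‖ ≤ ρ) {n : ℕ} (i : Fin (n + 1))
    (v : Fin (n + 1) → ZMod p) {C : ℝ} (hC0 : 0 ≤ C)
    (hC : ∀ b, Ex w (fun y => ind ((skewOf n y).mulVec (fun j => v (i.succAbove j)) = b)) ≤ C)
    (b : Fin (n + 1) → ZMod p) :
    Ex w (fun y => ind ((skewOf (n + 1) y).mulVec v = b)) ≤
      kap p ρ (hammingNorm fun j => v (i.succAbove j)) * C := by
  let g : ((Fin n × Fin n) ⊕ Fin n → ZMod p) → ℝ := fun z =>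
    ind ((fun j => peelSign (ZMod p) i j * v (i.succAbove j)) ⬝ᵥ (z ∘ Sum.inr) = b i) *
    ind ((skewOf n (z ∘ Sum.inl)).mulVec (fun j => v (i.succAbove j)) =
      fun a => b (i.succAbove a) + peelSign (ZMod p) i a * (z ∘ Sum.inr) a * v i)
  have hnorm : hammingNorm (fun j => peelSign (ZMod p) i j * v (i.succAbove j)) =
      hammingNorm fun j => v (i.succAbove j) := by
    unfold hammingNorm
    congr 1
    ext j
    have : peelSign (ZMod p) i j ≠ 0 := by unfold peelSign; split_ifs <;> simp
    simp [this]
  calc Ex w (fun y => ind ((skewOf (n + 1) y).mulVec v = b))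
      ≤ Ex w (fun y => g (y ∘ peel i)) := by
        refine Ex_mono hw fun y => ?_
        simp only [g]
        rw [← ind_and]
        refine ind_mono fun h => ⟨?_, ?_⟩
        · rw [← skewOf_mulVec_row, h]
        · ext a
          rw [← h, skewOf_mulVec_succAbove]; ring
    _ = Ex w g := Ex_comp_injective hw1 (peel_injective i) g
    _ = Ex w fun x : Fin n → ZMod p => Ex w fun y : Fin n × Fin n → ZMod p =>
          g (Sum.elim y x) := by rw [Ex_sumType, Ex_comm]
    _ ≤ Ex w fun x : Fin n → ZMod p => C *
          ind ((fun j => peelSign (ZMod p) i j * v (i.succAbove j)) ⬝ᵥ x = b i) := by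
        refine Ex_mono hw fun x => ?_
        simp only [g, Sum.elim_comp_inl, Sum.elim_comp_inr]
        rw [Ex_mul_left, mul_comm]
        exact mul_le_mul_of_nonneg_right (hC _) (ind_nonneg _)
    _ ≤ _ := by
        rw [Ex_mul_left, mul_comm]
        refine mul_le_mul_of_nonneg_right ?_ hC0
        rw [← hnorm]
        exact Ex_dot_le hw1 hρ _ _

theorem hammingNorm_succAbove {n : ℕ} (i : Fin (n + 1)) (v : Fin (n + 1) → ZMod p) :
    hammingNorm v = (if v i ≠ 0 then 1 else 0) + hammingNorm fun j => v (i.succAbove j) := by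
  simp only [hammingNorm, Finset.card_filter]
  rw [Fin.sum_univ_succAbove _ i]

theorem Ex_mulVec_eq_le (hw : ∀ a, 0 ≤ w a) (hw1 : ∑ a, w a = 1) (hρ0 : 0 < ρ)
    (hρ : ∀ t : ZMod p, t ≠ 0 → ‖entryChar w t‖ ≤ ρ) : ∀ (n : ℕ) (v b : Fin n → ZMod p),
    Ex w (fun y => ind ((skewOf n y).mulVec v = b)) ≤ concBound p ρ n (hammingNorm v)
  | 0, v, b => by
    have hv : hammingNorm v = 0 := by simp [hammingNorm]
    rw [hv]
    have : Ex w (fun y => ind ((skewOf 0 y).mulVec v = b)) ≤ Ex w (fun _ => (1 : ℝ)) :=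
      Ex_mono hw fun y => ind_le_one _
    simpa [concBound, Ex_one hw1] using this
  | n + 1, v, b => by
    have hp : 2 ≤ p := (Fact.out : p.Prime).two_le
    have hnn : ∀ n k, 0 ≤ concBound p ρ n k := fun n k =>
      mul_nonneg (pow_nonneg (kap_nonneg hp hρ0 _) _)
        (Finset.prod_nonneg fun _ _ => kap_nonneg hp hρ0 _)
    by_cases h : ∃ i, v i = 0
    · obtain ⟨i, hi⟩ := h
      have h1 := Ex_peel_le hw hw1 hρ i v (hnn n _)
        (fun b => Ex_mulVec_eq_le hw hw1 hρ0 hρ n _ b) b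
      have h2 : hammingNorm v = hammingNorm fun j => v (i.succAbove j) := by
        rw [hammingNorm_succAbove i]; simp [hi]
      refine h1.trans (le_of_eq ?_)
      rw [← h2]
      have h3 : hammingNorm v ≤ n := by
        rw [h2]; simpa using hammingNorm_le_card_fintype (x := fun j => v (i.succAbove j))
      unfold concBound
      rw [Nat.succ_sub h3, pow_succ]; ring
    · push Not at h
      have h1 := Ex_peel_le hw hw1 hρ 0 v (hnn n _)
        (fun b => Ex_mulVec_eq_le hw hw1 hρ0 hρ n _ b) b
      have h2 : hammingNorm v = n + 1 := by
        simp [hammingNorm, h]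
      have h3 : (hammingNorm fun j => v ((0 : Fin (n + 1)).succAbove j)) = n := by
        simp [hammingNorm, h]
      refine h1.trans (le_of_eq ?_)
      rw [h2, h3]
      simp only [concBound, Nat.sub_self, pow_zero, one_mul, Finset.prod_range_succ]
      ring

/-- The mean relative error of the uniform approximation: the expectation of the sum of
`ρ ^ hammingNorm v` over the nonzero kernel vectors `v` of the random matrix. -/
def epsErr (w : ZMod p → ℝ) (ρ : ℝ) (n : ℕ) : ℝ :=
  Ex w fun y : Fin n × Fin n → ZMod p => ∑ v : Fin n → ZMod p,
    ind ((skewOf n y).mulVec v = 0 ∧ v ≠ 0) * ρ ^ hammingNorm v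

theorem sum_pow_hammingNorm (t : ℝ) (n : ℕ) :
    ∑ v : Fin n → ZMod p, t ^ hammingNorm v = (1 + (p - 1) * t) ^ n := by
  have h1 : ∀ v : Fin n → ZMod p, t ^ hammingNorm v = ∏ i, (if v i ≠ 0 then t else 1) := by
    intro v; rw [Finset.prod_ite]; simp [hammingNorm]
  simp only [h1]
  rw [← Fintype.prod_sum (fun (_ : Fin n) (a : ZMod p) => if a ≠ 0 then t else 1)]
  rw [Finset.prod_const, Finset.card_univ, Fintype.card_fin]
  congr 1
  rw [← Finset.add_sum_erase _ _ (Finset.mem_univ (0 : ZMod p))]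
  rw [Finset.sum_congr rfl (g := fun _ => t) (fun a ha => if_pos (by simpa using ha))]
  rw [Finset.sum_const, Finset.card_erase_of_mem (Finset.mem_univ _), Finset.card_univ,
    ZMod.card, nsmul_eq_mul, Nat.cast_sub (Fact.out : p.Prime).one_le]
  simp

theorem epsErr_nonneg (hw : ∀ a, 0 ≤ w a) (hρ0 : 0 < ρ) (n : ℕ) : 0 ≤ epsErr w ρ n :=
  Ex_nonneg hw fun _ => Finset.sum_nonneg fun _ _ => mul_nonneg (ind_nonneg _) (by positivity)

/-- Vectors with fewer than `m` nonzero coordinates are counted through the generating function at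
`T⁻¹`, which gives the first term; the remaining ones give the second. -/
theorem epsErr_le (hw : ∀ a, 0 ≤ w a) (hw1 : ∑ a, w a = 1) (hρ0 : 0 < ρ) (hρ1 : ρ < 1)
    (hρ : ∀ t : ZMod p, t ≠ 0 → ‖entryChar w t‖ ≤ ρ) (n m : ℕ) {T : ℝ} (hT : 1 ≤ T) :
    epsErr w ρ n ≤ kap p ρ 1 ^ (n - 1) * T ^ m * (1 + (p - 1) * T⁻¹) ^ n +
      ρ ^ m * (Real.exp (n * (p * ρ ^ m)) * Real.exp (p * (1 - ρ)⁻¹)) := by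
  have hp : 2 ≤ p := (Fact.out : p.Prime).two_le
  have hp0 : (0 : ℝ) < p := by exact_mod_cast (by omega : 0 < p)
  set β := kap p ρ 1
  have hβ0 : 0 < β := kap_one_pos hp hρ0
  set D := Real.exp (n * (p * ρ ^ m)) * Real.exp (p * (1 - ρ)⁻¹)
  have hD : 0 ≤ D := by positivity
  have hT0 : 0 < T := by linarith
  have hterm : ∀ v : Fin n → ZMod p,
      Ex w (fun y => ind ((skewOf n y).mulVec v = 0 ∧ v ≠ 0) * ρ ^ hammingNorm v) ≤
      β ^ (n - 1) * T ^ m * T⁻¹ ^ hammingNorm v + ρ ^ m * (((p : ℝ)⁻¹) ^ n * D) := by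
    intro v
    have hR : 0 ≤ β ^ (n - 1) * T ^ m * T⁻¹ ^ hammingNorm v := by positivity
    have hR' : 0 ≤ ρ ^ m * (((p : ℝ)⁻¹) ^ n * D) := by positivity
    by_cases hv : v = 0
    · have : ∀ y : Fin n × Fin n → ZMod p,
          ind ((skewOf n y).mulVec v = 0 ∧ v ≠ 0) * ρ ^ hammingNorm v = 0 := fun y => by
        rw [ind_false (by simp [hv]), zero_mul]
      simp only [this, Ex_const hw1]
      linarith
    have hnv : hammingNorm v ≤ n := by simpa using hammingNorm_le_card_fintype (x := v)
    have hpos : 1 ≤ hammingNorm v := hammingNorm_pos_iff.2 hv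
    have h1 : Ex w (fun y => ind ((skewOf n y).mulVec v = 0 ∧ v ≠ 0) * ρ ^ hammingNorm v) ≤
        ρ ^ hammingNorm v * concBound p ρ n (hammingNorm v) := by
      have := Ex_mulVec_eq_le hw hw1 hρ0 hρ n v 0
      simp only [mul_comm _ (ρ ^ hammingNorm v)]
      rw [Ex_mul_left]
      refine mul_le_mul_of_nonneg_left (le_trans ?_ this) (by positivity)
      exact Ex_mono hw fun y => ind_mono fun h => h.1
    refine h1.trans ?_
    rcases lt_or_ge (hammingNorm v) m with hm | hm
    · have h2 : ρ ^ hammingNorm v * concBound p ρ n (hammingNorm v) ≤ 1 * β ^ (n - 1) := by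
        refine mul_le_mul (pow_le_one₀ hρ0.le hρ1.le) (concBound_le_one hp hρ0 hρ1 hpos hnv) ?_
          zero_le_one
        exact mul_nonneg (pow_nonneg (kap_nonneg hp hρ0 _) _)
          (Finset.prod_nonneg fun _ _ => kap_nonneg hp hρ0 _)
      have h3 : 1 ≤ T ^ m * T⁻¹ ^ hammingNorm v := by
        rw [inv_pow, ← div_eq_mul_inv, le_div_iff₀ (by positivity), one_mul]
        exact pow_le_pow_right₀ hT hm.le
      have h4 := mul_le_mul_of_nonneg_left h3 (pow_nonneg hβ0.le (n - 1))
      linarith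
    · have h2 : ρ ^ hammingNorm v * concBound p ρ n (hammingNorm v) ≤
          ρ ^ m * (((p : ℝ)⁻¹) ^ n * D) := by
        refine mul_le_mul (pow_le_pow_of_le_one hρ0.le hρ1.le hm)
          (concBound_le_exp hp hρ0 hρ1 hm hnv) ?_ (by positivity)
        exact mul_nonneg (pow_nonneg (kap_nonneg hp hρ0 _) _)
          (Finset.prod_nonneg fun _ _ => kap_nonneg hp hρ0 _)
      linarith
  unfold epsErr
  rw [Ex_sum]
  refine (Finset.sum_le_sum fun v _ => hterm v).trans (le_of_eq ?_)
  rw [Finset.sum_add_distrib, ← Finset.mul_sum, sum_pow_hammingNorm, Finset.sum_const,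
    Finset.card_univ]
  have hcard : (Fintype.card (Fin n → ZMod p) : ℝ) = (p : ℝ) ^ n := by simp [ZMod.card]
  rw [nsmul_eq_mul, hcard]
  congr 1
  rw [inv_pow]
  field_simp

theorem tendsto_epsErr (hw : ∀ a, 0 ≤ w a) (hw1 : ∑ a, w a = 1) (hρ0 : 0 < ρ) (hρ1 : ρ < 1)
    (hρ : ∀ t : ZMod p, t ≠ 0 → ‖entryChar w t‖ ≤ ρ) :
    Tendsto (epsErr w ρ) atTop (nhds 0) := by
  have hp : 2 ≤ p := (Fact.out : p.Prime).two_le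
  have hp2 : (2 : ℝ) ≤ p := by exact_mod_cast hp
  set β := kap p ρ 1 with hβ
  have hβ0 : 0 < β := kap_one_pos hp hρ0
  have hβ1 : β < 1 := kap_one_lt_one hp hρ1
  -- `γ > 1` is chosen with `γ ^ 2 * β < 1`: one factor `γ ^ n` pays for `T ^ m`, where `m = n / K`,
  -- and one for the generating function at `T⁻¹`
  set γ : ℝ := 2 / (1 + β) with hγ
  have hγ1 : 1 < γ := by rw [hγ, lt_div_iff₀ (by linarith)]; linarith
  have hγ2 : γ ≤ 2 := by rw [hγ, div_le_iff₀ (by linarith)]; linarith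
  have hγβ : γ * γ * β < 1 := by
    have : γ * γ * β = 4 * β / (1 + β) ^ 2 := by rw [hγ]; field_simp; ring
    rw [this, div_lt_one (by positivity)]
    nlinarith [sq_pos_of_pos (sub_pos.2 hβ1)]
  set T : ℝ := p / (γ - 1) with hTdef
  have hTp : (p : ℝ) ≤ T := by
    rw [hTdef, le_div_iff₀ (by linarith)]; nlinarith
  have hT1 : 1 ≤ T := by linarith
  have hTγ : 1 + ((p : ℝ) - 1) * T⁻¹ ≤ γ := by
    have : (p : ℝ) * T⁻¹ = γ - 1 := by
      rw [hTdef]; field_simp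
    have h3 : 0 < T⁻¹ := by positivity
    linarith
  obtain ⟨K, hK⟩ := pow_unbounded_of_one_lt T hγ1
  have hK0 : K ≠ 0 := by rintro rfl; simp at hK; linarith
  have hTm : ∀ n : ℕ, T ^ (n / K) ≤ γ ^ n := by
    intro n
    calc T ^ (n / K) ≤ (γ ^ K) ^ (n / K) := pow_le_pow_left₀ (by linarith) hK.le _
      _ = γ ^ (K * (n / K)) := by rw [pow_mul]
      _ ≤ γ ^ n := pow_le_pow_right₀ hγ1.le (Nat.mul_div_le n K)
  have hβn : ∀ n : ℕ, β ^ (n - 1) ≤ β⁻¹ * β ^ n := by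
    intro n
    rcases n with _ | n
    · simpa using (one_le_inv₀ hβ0).2 hβ1.le
    · rw [pow_succ]; simp only [Nat.add_sub_cancel]; field_simp; exact le_rfl
  have hq : Tendsto (fun n : ℕ => n / K) atTop atTop :=
    Nat.tendsto_div_const_atTop hK0
  have hρK : Tendsto (fun n : ℕ => ρ ^ (n / K)) atTop (nhds 0) :=
    (tendsto_pow_atTop_nhds_zero_of_lt_one hρ0.le hρ1).comp hq
  have hnρ : Tendsto (fun n : ℕ => (n : ℝ) * ρ ^ (n / K)) atTop (nhds 0) := by
    have h1 := (tendsto_self_mul_const_pow_of_lt_one hρ0.le hρ1).comp hq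
    have h2 : Tendsto (fun n : ℕ => (K : ℝ) * (((n / K : ℕ) : ℝ) * ρ ^ (n / K) + ρ ^ (n / K)))
        atTop (nhds 0) := by
      simpa using (h1.add hρK).const_mul (K : ℝ)
    refine squeeze_zero (fun n => by positivity) (fun n => ?_) h2
    have h3 : (n : ℝ) ≤ K * ((n / K : ℕ) + 1) := by
      have h4 : n ≤ K * (n / K + 1) := by
        have := Nat.div_add_mod n K
        have := Nat.mod_lt n (Nat.pos_of_ne_zero hK0)
        rw [mul_add]; omega
      exact_mod_cast h4
    calc (n : ℝ) * ρ ^ (n / K) ≤ (K * ((n / K : ℕ) + 1)) * ρ ^ (n / K) := by gcongr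
      _ = _ := by ring
  have hbound : ∀ n, epsErr w ρ n ≤ β⁻¹ * (γ * γ * β) ^ n +
      ρ ^ (n / K) * (Real.exp (p * (n * ρ ^ (n / K))) * Real.exp (p * (1 - ρ)⁻¹)) := by
    intro n
    refine (epsErr_le hw hw1 hρ0 hρ1 hρ n (n / K) hT1).trans ?_
    rw [mul_left_comm (n : ℝ)]
    refine add_le_add ?_ le_rfl
    have h0 : 0 ≤ 1 + ((p : ℝ) - 1) * T⁻¹ := by
      have : 0 ≤ ((p : ℝ) - 1) * T⁻¹ := mul_nonneg (by linarith) (by positivity)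
      linarith
    calc β ^ (n - 1) * T ^ (n / K) * (1 + (p - 1) * T⁻¹) ^ n
        ≤ (β⁻¹ * β ^ n) * γ ^ n * γ ^ n := by
          gcongr
          · exact hβn n
          · exact hTm n
      _ = _ := by rw [mul_pow, mul_pow]; ring
  have hlim : Tendsto (fun n : ℕ => β⁻¹ * (γ * γ * β) ^ n +
      ρ ^ (n / K) * (Real.exp (p * (n * ρ ^ (n / K))) * Real.exp (p * (1 - ρ)⁻¹)))
      atTop (nhds 0) := by
    have h1 := (tendsto_pow_atTop_nhds_zero_of_lt_one (r := γ * γ * β) (by positivity)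
      hγβ).const_mul β⁻¹
    have h2 := (Real.continuous_exp.tendsto _).comp (hnρ.const_mul (p : ℝ))
    have h3 := h1.add (hρK.mul (h2.mul_const (Real.exp (p * (1 - ρ)⁻¹))))
    simpa using h3
  exact squeeze_zero (fun n => epsErr_nonneg hw hρ0 n) hbound hlim

end Concentration

/-! ### The ideal corank chain -/

section Ideal

/-- The probability that the corank chain with uniform entries, started from the empty matrix and
run for `n` steps, is at least `c`; here `x = 1 / p`, and from state `c` the chain goes up with
probability `x ^ c` and down otherwise. The recursion for tails is valid at states of the parity of
`n`, the only ones used. -/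
def idealTail (x : ℝ) : ℕ → ℕ → ℝ
  | 0, c => if c = 0 then 1 else 0
  | _ + 1, 0 => 1
  | n + 1, c + 1 => (1 - x ^ c) * idealTail x n (c + 2) + x ^ c * idealTail x n c

/-- The product `(1 - x)(1 - x ^ 2) ⋯ (1 - x ^ k)`. -/
def qPoch (x : ℝ) (k : ℕ) : ℝ := ∏ j ∈ Finset.range k, (1 - x ^ (j + 1))

/-- The product of `1 - x ^ (2 j)` for `1 ≤ j ≤ m`. -/
def evenPoch (x : ℝ) (m : ℕ) : ℝ := ∏ j ∈ Finset.range m, (1 - x ^ (2 * (j + 1)))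

/-- The product of `1 - x ^ (2 j + 1)` for `0 ≤ j < m`. -/
def oddPoch (x : ℝ) (m : ℕ) : ℝ := ∏ j ∈ Finset.range m, (1 - x ^ (2 * j + 1))

/-- Closed form for the probability that the ideal chain is at `c` after `c + 2 * m` steps. -/
def idealMass (x : ℝ) (m c : ℕ) : ℝ :=
  x ^ c.choose 2 * qPoch x (c + 2 * m) / (qPoch x c * evenPoch x m)

variable {x : ℝ}

theorem one_sub_pow_pos (hx0 : 0 < x) (hx1 : x < 1) {k : ℕ} (hk : k ≠ 0) : 0 < 1 - x ^ k :=
  sub_pos.2 (pow_lt_one₀ hx0.le hx1 hk)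

theorem qPoch_pos (hx0 : 0 < x) (hx1 : x < 1) (k : ℕ) : 0 < qPoch x k :=
  Finset.prod_pos fun _ _ => one_sub_pow_pos hx0 hx1 (by omega)

theorem evenPoch_pos (hx0 : 0 < x) (hx1 : x < 1) (k : ℕ) : 0 < evenPoch x k :=
  Finset.prod_pos fun _ _ => one_sub_pow_pos hx0 hx1 (by omega)

theorem oddPoch_pos (hx0 : 0 < x) (hx1 : x < 1) (k : ℕ) : 0 < oddPoch x k :=
  Finset.prod_pos fun _ _ => one_sub_pow_pos hx0 hx1 (by omega)

theorem qPoch_succ (k : ℕ) : qPoch x (k + 1) = qPoch x k * (1 - x ^ (k + 1)) :=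
  Finset.prod_range_succ _ _

theorem evenPoch_succ (k : ℕ) : evenPoch x (k + 1) = evenPoch x k * (1 - x ^ (2 * (k + 1))) :=
  Finset.prod_range_succ _ _

theorem oddPoch_succ (k : ℕ) : oddPoch x (k + 1) = oddPoch x k * (1 - x ^ (2 * k + 1)) :=
  Finset.prod_range_succ _ _

theorem choose_two_succ (c : ℕ) : (c + 1).choose 2 = c.choose 2 + c := by
  rw [Nat.choose_succ_succ' c 1, Nat.choose_one_right, add_comm]

theorem idealMass_zero_succ (hx0 : 0 < x) (hx1 : x < 1) (c : ℕ) :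
    idealMass x 0 (c + 1) = x ^ c * idealMass x 0 c := by
  have h1 := (qPoch_pos hx0 hx1 c).ne'
  have h2 := (qPoch_pos hx0 hx1 (c + 1)).ne'
  simp only [idealMass, evenPoch, Finset.range_zero, Finset.prod_empty, mul_zero, add_zero,
    mul_one, choose_two_succ, pow_add]
  field_simp

theorem idealMass_succ_zero (hx0 : 0 < x) (hx1 : x < 1) (m : ℕ) :
    idealMass x (m + 1) 0 = (1 - x) * idealMass x m 1 := by
  have h1 := (evenPoch_pos hx0 hx1 m).ne'
  have h2 := (one_sub_pow_pos hx0 hx1 (k := 2 * (m + 1)) (by omega)).ne'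
  have h3 : 1 - x ≠ 0 := by linarith
  have e1 : 0 + 2 * (m + 1) = (2 * m + 1) + 1 := by ring
  have e2 : 1 + 2 * m = 2 * m + 1 := by ring
  simp only [idealMass, e1, e2, qPoch_succ (2 * m + 1), evenPoch_succ]
  have e3 : qPoch x 0 = 1 := by simp [qPoch]
  have e4 : qPoch x 1 = 1 - x := by simp [qPoch]
  have e5 : 2 * m + 1 + 1 = 2 * (m + 1) := by ring
  rw [e3, e4, e5]
  simp only [Nat.choose_zero_succ, Nat.choose_eq_zero_of_lt (show 1 < 2 by norm_num), pow_zero]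
  field_simp

theorem idealMass_succ_succ (hx0 : 0 < x) (hx1 : x < 1) (m c : ℕ) :
    idealMass x (m + 1) (c + 1) =
      x ^ c * idealMass x (m + 1) c + (1 - x ^ (c + 2)) * idealMass x m (c + 2) := by
  have h1 := (evenPoch_pos hx0 hx1 m).ne'
  have h2 := (one_sub_pow_pos hx0 hx1 (k := 2 * (m + 1)) (by omega)).ne'
  have h3 := (qPoch_pos hx0 hx1 c).ne'
  have h4 := (one_sub_pow_pos hx0 hx1 (k := c + 1) (by omega)).ne'
  have h5 := (one_sub_pow_pos hx0 hx1 (k := c + 2) (by omega)).ne'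
  have e1 : c + 1 + 2 * (m + 1) = (c + 2 * (m + 1)) + 1 := by ring
  have e2 : c + 2 + 2 * m = c + 2 * (m + 1) := by ring
  simp only [idealMass, e1, e2, qPoch_succ, evenPoch_succ, choose_two_succ (c + 1),
    choose_two_succ c]
  rw [show c + 1 + 1 = c + 2 by ring]
  field_simp
  ring

theorem idealTail_eq_zero : ∀ (n c : ℕ), n < c → idealTail x n c = 0
  | 0, c, h => by simp [idealTail]; omega
  | n + 1, 0, h => by omega
  | n + 1, c + 1, h => by
    simp [idealTail, idealTail_eq_zero n (c + 2) (by omega), idealTail_eq_zero n c (by omega)]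

theorem idealTail_zero (n : ℕ) : idealTail x n 0 = 1 := by
  cases n <;> simp [idealTail]

theorem idealTail_one (n : ℕ) : idealTail x (n + 1) 1 = 1 := by
  simp [idealTail, idealTail_zero]

/-- The closed form obeys the transition recursion of the ideal chain, hence equals the difference
of consecutive tails of the right parity. -/
theorem idealTail_sub (hx0 : 0 < x) (hx1 : x < 1) : ∀ (n m c : ℕ), n = c + 2 * m →
    idealTail x n c - idealTail x n (c + 2) = idealMass x m c
  | 0, m, c, h => by
    obtain rfl : c = 0 := by omega
    obtain rfl : m = 0 := by omega
    simp [idealTail, idealMass, qPoch, evenPoch]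
  | n + 1, m, 0, h => by
    obtain ⟨m, rfl⟩ : ∃ m', m = m' + 1 := ⟨m - 1, by omega⟩
    obtain ⟨n, rfl⟩ : ∃ n', n = n' + 1 := ⟨n - 1, by omega⟩
    have ih := idealTail_sub hx0 hx1 (n + 1) m 1 (by omega)
    rw [idealMass_succ_zero hx0 hx1, ← ih, idealTail_zero]
    have : idealTail x (n + 1 + 1) (0 + 2) =
      (1 - x ^ 1) * idealTail x (n + 1) (1 + 2) + x ^ 1 * idealTail x (n + 1) 1 := rfl
    rw [this, idealTail_one]; ring
  | n + 1, m, c + 1, h => by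
    have ih1 := idealTail_sub hx0 hx1 n m c (by omega)
    have e : idealTail x (n + 1) (c + 1) - idealTail x (n + 1) (c + 1 + 2) =
        x ^ c * (idealTail x n c - idealTail x n (c + 2)) +
        (1 - x ^ (c + 2)) * (idealTail x n (c + 2) - idealTail x n (c + 2 + 2)) := by
      have e1 : idealTail x (n + 1) (c + 1) =
        (1 - x ^ c) * idealTail x n (c + 2) + x ^ c * idealTail x n c := rfl
      have e2 : idealTail x (n + 1) (c + 1 + 2) =
        (1 - x ^ (c + 2)) * idealTail x n (c + 2 + 2) + x ^ (c + 2) * idealTail x n (c + 2) := rfl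
      rw [e1, e2]; ring
    rw [e, ih1]
    rcases m with _ | m
    · rw [idealTail_eq_zero n (c + 2) (by omega), idealTail_eq_zero n (c + 2 + 2) (by omega),
        idealMass_zero_succ hx0 hx1]; ring
    · rw [idealTail_sub hx0 hx1 n m (c + 2) (by omega), idealMass_succ_succ hx0 hx1]

theorem qPoch_even : ∀ k : ℕ, qPoch x (2 * k) = oddPoch x k * evenPoch x k
  | 0 => by simp [qPoch, oddPoch, evenPoch]
  | k + 1 => by
    rw [show 2 * (k + 1) = 2 * k + 1 + 1 by ring, qPoch_succ, qPoch_succ, qPoch_even k,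
      oddPoch_succ, evenPoch_succ, show 2 * k + 1 + 1 = 2 * (k + 1) by ring]
    ring

theorem qPoch_odd (k : ℕ) : qPoch x (2 * k + 1) = oddPoch x (k + 1) * evenPoch x k := by
  rw [qPoch_succ, qPoch_even, oddPoch_succ]; ring

theorem oddPoch_add (a m : ℕ) :
    oddPoch x (a + m) = oddPoch x a * ∏ j ∈ Finset.range m, (1 - x ^ (2 * (j + a) + 1)) := by
  unfold oddPoch
  rw [Finset.prod_range_add]
  congr 1
  exact Finset.prod_congr rfl fun j _ => by rw [add_comm a j]

theorem evenPoch_add (m r : ℕ) :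
    evenPoch x (m + r) =
      evenPoch x m * ∏ j ∈ Finset.range r, (1 - x ^ (2 * (m + j + 1))) := by
  unfold evenPoch
  rw [Finset.prod_range_add]

theorem tendsto_prod_odd (hx0 : 0 < x) (hx1 : x < 1) (a : ℕ) :
    Tendsto (fun m => ∏ j ∈ Finset.range m, (1 - x ^ (2 * (j + a) + 1))) atTop
      (nhds (∏' j : ℕ, (1 - x ^ (2 * (j + a) + 1)))) := by
  have hs : Summable fun j : ℕ => -(x ^ (2 * (j + a) + 1)) := by
    have h1 : Summable fun j : ℕ => (x ^ (2 * a + 1)) * (x ^ 2) ^ j :=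
      (summable_geometric_of_lt_one (by positivity)
        (pow_lt_one₀ hx0.le hx1 (by norm_num))).mul_left _
    refine (h1.congr fun j => ?_).neg
    rw [← pow_mul, ← pow_add]; congr 1; ring
  have := (Real.multipliable_one_add_of_summable hs).hasProd.tendsto_prod_nat
  simpa only [← sub_eq_add_neg] using this

theorem tendsto_prod_even (hx0 : 0 < x) (hx1 : x < 1) (r : ℕ) :
    Tendsto (fun m => ∏ j ∈ Finset.range r, (1 - x ^ (2 * (m + j + 1)))) atTop (nhds 1) := by
  have : Tendsto (fun m => ∏ j ∈ Finset.range r, (1 - x ^ (2 * (m + j + 1)))) atTop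
      (nhds (∏ j ∈ Finset.range r, (1 - 0))) := by
    refine tendsto_finsetProd _ fun j _ => ?_
    refine tendsto_const_nhds.sub ?_
    refine (tendsto_pow_atTop_nhds_zero_of_lt_one hx0.le hx1).comp ?_
    exact tendsto_atTop_mono (fun m => by change m ≤ _; omega) tendsto_id
  simpa using this

theorem tendsto_idealMass_even (hx0 : 0 < x) (hx1 : x < 1) (r : ℕ) :
    Tendsto (fun m => idealMass x m (2 * r)) atTop
      (nhds (x ^ (2 * r).choose 2 * (∏' j : ℕ, (1 - x ^ (2 * (j + r) + 1))) / evenPoch x r)) := by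
  have h := (((tendsto_prod_odd hx0 hx1 r).const_mul (x ^ (2 * r).choose 2)).mul
    (tendsto_prod_even hx0 hx1 r)).div_const (evenPoch x r)
  rw [mul_one] at h
  refine h.congr fun m => ?_
  have h1 := (evenPoch_pos hx0 hx1 m).ne'
  have h2 := (evenPoch_pos hx0 hx1 r).ne'
  have h3 := (oddPoch_pos hx0 hx1 r).ne'
  rw [idealMass, show 2 * r + 2 * m = 2 * (m + r) by ring, qPoch_even, qPoch_even, evenPoch_add,
    add_comm m r, oddPoch_add]
  field_simp

theorem tendsto_idealMass_odd (hx0 : 0 < x) (hx1 : x < 1) (r : ℕ) :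
    Tendsto (fun m => idealMass x m (2 * r + 1)) atTop
      (nhds (x ^ (2 * r + 1).choose 2 * (∏' j : ℕ, (1 - x ^ (2 * (j + (r + 1)) + 1))) /
        evenPoch x r)) := by
  have h := (((tendsto_prod_odd hx0 hx1 (r + 1)).const_mul (x ^ (2 * r + 1).choose 2)).mul
    (tendsto_prod_even hx0 hx1 r)).div_const (evenPoch x r)
  rw [mul_one] at h
  refine h.congr fun m => ?_
  have h1 := (evenPoch_pos hx0 hx1 m).ne'
  have h2 := (evenPoch_pos hx0 hx1 r).ne'
  have h3 := (oddPoch_pos hx0 hx1 (r + 1)).ne'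
  rw [idealMass, show 2 * r + 1 + 2 * m = 2 * (m + r) + 1 by ring, qPoch_odd, qPoch_odd,
    evenPoch_add, show m + r + 1 = (r + 1) + m by ring, oddPoch_add]
  field_simp

end Ideal

/-! ### Comparison with the ideal chain -/

section Compare

/-- The error recursion of the comparison: contraction by `7 / 8` with forcing term `2 * ε n`. -/
def errBound (ε : ℕ → ℝ) : ℕ → ℝ
  | 0 => 0
  | n + 1 => 7 / 8 * errBound ε n + 2 * ε n

theorem errBound_nonneg {ε : ℕ → ℝ} (hε : ∀ n, 0 ≤ ε n) : ∀ n, 0 ≤ errBound ε n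
  | 0 => le_rfl
  | n + 1 => by
    have := errBound_nonneg hε n
    have := hε n
    simp only [errBound]; linarith

theorem tendsto_errBound {ε : ℕ → ℝ} (hε : ∀ n, 0 ≤ ε n) (h : Tendsto ε atTop (nhds 0)) :
    Tendsto (errBound ε) atTop (nhds 0) := by
  rw [Metric.tendsto_atTop]
  intro e he
  obtain ⟨N, hN⟩ := (Metric.tendsto_atTop.1 h) (e / 32) (by positivity)
  have h1 : ∀ k, errBound ε (N + k) - e / 2 ≤ (7 / 8) ^ k * errBound ε N := by
    intro k
    induction k with
    | zero => simp; positivity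
    | succ k ih =>
      have h2 := hN (N + k) (by omega)
      rw [Real.dist_eq, sub_zero, abs_of_nonneg (hε _)] at h2
      have h3 : errBound ε (N + (k + 1)) = 7 / 8 * errBound ε (N + k) + 2 * ε (N + k) := rfl
      rw [h3, pow_succ]
      linarith
  have h2 : Tendsto (fun k : ℕ => (7 / 8 : ℝ) ^ k * errBound ε N) atTop (nhds 0) := by
    simpa using (tendsto_pow_atTop_nhds_zero_of_lt_one (by norm_num : (0 : ℝ) ≤ 7 / 8)
      (by norm_num)).mul_const (errBound ε N)
  obtain ⟨M, hM⟩ := (Metric.tendsto_atTop.1 h2) (e / 2) (by positivity)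
  refine ⟨N + M, fun n hn => ?_⟩
  obtain ⟨k, rfl⟩ : ∃ k, n = N + k := ⟨n - N, by omega⟩
  have h3 := hM k (by omega)
  rw [Real.dist_eq, sub_zero] at h3 ⊢
  rw [abs_of_nonneg (errBound_nonneg hε _)]
  have h4 := h1 k
  have h5 := le_abs_self ((7 / 8 : ℝ) ^ k * errBound ε N)
  linarith

variable {p : ℕ} [Fact p.Prime] {w : ZMod p → ℝ} {ρ : ℝ}

/-- The probability that the random skew-symmetric matrix of size `n` with entry weights `w` has
corank at least `c`. -/
def tailProb (w : ZMod p → ℝ) (n c : ℕ) : ℝ :=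
  Ex w fun y : Fin n × Fin n → ZMod p => ind (c ≤ corank (skewOf n y))

theorem ind_corank_eq {n c : ℕ} (h : n % 2 = c % 2) (y : Fin n × Fin n → ZMod p) :
    ind (corank (skewOf n y) = c) =
      ind (c ≤ corank (skewOf n y)) - ind (c + 2 ≤ corank (skewOf n y)) := by
  have hpar := corank_parity n y
  rcases lt_trichotomy (corank (skewOf n y)) c with h1 | h1 | h1
  · rw [ind_false (by omega), ind_false (by omega), ind_false (by omega)]; ring
  · rw [ind_true (by omega), ind_true (by omega), ind_false (by omega)]; ring
  · rw [ind_false (by omega), ind_true (by omega), ind_true (by omega)]; ring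

theorem prob_corank_eq {n c : ℕ} (h : n % 2 = c % 2) :
    Ex w (fun y : Fin n × Fin n → ZMod p => ind (corank (skewOf n y) = c)) =
      tailProb w n c - tailProb w n (c + 2) := by
  simp only [ind_corank_eq h, Ex_sub, tailProb]

/-- One step of the corank process: corank at least `c + 1` is reached from corank at least `c + 2`
in any case, and from corank `c` exactly when the new row is orthogonal to the kernel. -/
theorem tailProb_succ (hw1 : ∑ a, w a = 1) {n c : ℕ} (h : n % 2 = c % 2) :
    tailProb w (n + 1) (c + 1) = tailProb w n (c + 2) +
      Ex w fun y : Fin n × Fin n → ZMod p => ind (corank (skewOf n y) = c) *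
        Ex w fun x : Fin n → ZMod p =>
          ind (∀ v ∈ LinearMap.ker (skewOf n y).mulVecLin, v ⬝ᵥ x = 0) := by
  let g : ((Fin n × Fin n) ⊕ Fin n → ZMod p) → ℝ := fun z =>
    ind (c + 2 ≤ corank (skewOf n (z ∘ Sum.inl))) +
      ind (corank (skewOf n (z ∘ Sum.inl)) = c) *
        ind (∀ v ∈ LinearMap.ker (skewOf n (z ∘ Sum.inl)).mulVecLin, v ⬝ᵥ (z ∘ Sum.inr) = 0)
  have hg : ∀ y : Fin (n + 1) × Fin (n + 1) → ZMod p,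
      ind (c + 1 ≤ corank (skewOf (n + 1) y)) = g (y ∘ peel 0) := by
    intro y
    have hpar := corank_parity n ((y ∘ peel 0) ∘ Sum.inl)
    simp only [g, LinearMap.mem_ker, Matrix.mulVecLin_apply]
    by_cases hperp : ∀ v, (skewOf n ((y ∘ peel 0) ∘ Sum.inl)).mulVec v = 0 →
      v ⬝ᵥ ((y ∘ peel 0) ∘ Sum.inr) = 0
    · have h1 := corank_succ_of_perp y hperp
      rw [ind_true hperp, mul_one]
      rcases lt_trichotomy (corank (skewOf n ((y ∘ peel 0) ∘ Sum.inl))) c with h2 | h2 | h2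
      · rw [ind_false (by omega), ind_false (by omega), ind_false (by omega)]; ring
      · rw [ind_true (by omega), ind_false (by omega), ind_true h2]; ring
      · rw [ind_true (by omega), ind_true (by omega), ind_false (by omega)]; ring
    · have h1 := corank_succ_of_not_perp y hperp
      rw [ind_false hperp, mul_zero, add_zero]
      by_cases h2 : c + 2 ≤ corank (skewOf n ((y ∘ peel 0) ∘ Sum.inl))
      · rw [ind_true (by omega), ind_true h2]
      · rw [ind_false (by omega), ind_false h2]
  unfold tailProb
  simp only [hg]
  rw [Ex_comp_injective hw1 (peel_injective 0) g, Ex_sumType, ← Ex_add]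
  congr 1
  ext y
  simp only [g, Sum.elim_comp_inl, Sum.elim_comp_inr]
  rw [Ex_add, Ex_const hw1, Ex_mul_left]

/-- The tails of the actual corank process satisfy the ideal recursion up to `p ^ (-c) * epsErr`. -/
theorem abs_tailProb_succ_sub_le (hw : ∀ a, 0 ≤ w a) (hw1 : ∑ a, w a = 1) (hρ0 : 0 < ρ)
    (hρ : ∀ t : ZMod p, t ≠ 0 → ‖entryChar w t‖ ≤ ρ) {n c : ℕ} (h : n % 2 = c % 2) :
    |tailProb w (n + 1) (c + 1) - ((1 - ((p : ℝ)⁻¹) ^ c) * tailProb w n (c + 2) +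
      ((p : ℝ)⁻¹) ^ c * tailProb w n c)| ≤ ((p : ℝ)⁻¹) ^ c * epsErr w ρ n := by
  have hp0 : (0 : ℝ) < p := by exact_mod_cast (Fact.out : p.Prime).pos
  set x : ℝ := (p : ℝ)⁻¹
  have hx : 0 < x := inv_pos.2 hp0
  have h1 := prob_corank_eq (w := w) h
  have e : tailProb w (n + 1) (c + 1) - ((1 - x ^ c) * tailProb w n (c + 2) +
      x ^ c * tailProb w n c) =
      Ex w fun y : Fin n × Fin n → ZMod p => ind (corank (skewOf n y) = c) *
        (Ex w (fun x : Fin n → ZMod p =>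
          ind (∀ v ∈ LinearMap.ker (skewOf n y).mulVecLin, v ⬝ᵥ x = 0)) - x ^ c) := by
    rw [tailProb_succ hw1 h]
    simp only [mul_sub, Ex_sub]
    simp only [mul_comm _ (x ^ c)]
    rw [Ex_mul_left, h1]
    ring
  rw [e, epsErr, ← Ex_mul_left]
  refine (Ex_abs_le hw _).trans (Ex_mono hw fun y => ?_)
  have hnn : 0 ≤ ∑ v : Fin n → ZMod p,
      ind ((skewOf n y).mulVec v = 0 ∧ v ≠ 0) * ρ ^ hammingNorm v :=
    Finset.sum_nonneg fun _ _ => mul_nonneg (ind_nonneg _) (by positivity)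
  by_cases hc : corank (skewOf n y) = c
  · rw [ind_true hc, one_mul]
    have := abs_Ex_perp_sub_le hw1 hρ (LinearMap.ker (skewOf n y).mulVecLin)
    have hc' : Module.finrank (ZMod p) (LinearMap.ker (skewOf n y).mulVecLin) = c := hc
    rw [hc'] at this
    simpa only [LinearMap.mem_ker, Matrix.mulVecLin_apply] using this
  · rw [ind_false hc, zero_mul, abs_zero]
    positivity

theorem tailProb_zero (hw1 : ∑ a, w a = 1) (n : ℕ) : tailProb w n 0 = 1 := by
  have : ∀ y : Fin n × Fin n → ZMod p, ind (0 ≤ corank (skewOf n y)) = 1 :=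
    fun y => ind_true (Nat.zero_le _)
  simp only [tailProb, this, Ex_const hw1]

theorem tailProb_one (hw1 : ∑ a, w a = 1) {n : ℕ} (h : n % 2 = 1) : tailProb w n 1 = 1 := by
  have : ∀ y : Fin n × Fin n → ZMod p, ind (1 ≤ corank (skewOf n y)) = 1 := by
    intro y
    have := corank_parity n y
    exact ind_true (by omega)
  simp only [tailProb, this, Ex_const hw1]

/-- Weighted contraction: in the norm with weights `2 ^ c` the coefficients `1 - x ^ (c + 1)` and
`x ^ (c + 1)` of the recursion have total weight at most `1 / 2 + 3 / 8 = 7 / 8` when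
`x ^ (c + 1) ≤ 1 / 4`. The remaining case `c = 0` has no error in its lower term. -/
theorem abs_tailProb_sub_ideal_le (hw : ∀ a, 0 ≤ w a) (hw1 : ∑ a, w a = 1) (hρ0 : 0 < ρ)
    (hρ : ∀ t : ZMod p, t ≠ 0 → ‖entryChar w t‖ ≤ ρ) : ∀ (n c : ℕ), n % 2 = c % 2 →
    |tailProb w n c - idealTail (p : ℝ)⁻¹ n c| ≤ errBound (epsErr w ρ) n * (1 / 2) ^ c
  | 0, c, h => by
    rcases c with _ | c
    · simp [tailProb_zero hw1, idealTail, errBound]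
    · have : ∀ y : Fin 0 × Fin 0 → ZMod p, ind (c + 1 ≤ corank (skewOf 0 y)) = 0 := by
        intro y
        have := rank_add_corank (skewOf 0 y)
        exact ind_false (by omega)
      simp only [tailProb, this, Ex_const hw1]
      simp [idealTail, errBound]
  | n + 1, 0, h => by
    have := errBound_nonneg (fun n => epsErr_nonneg hw hρ0 n) (n + 1)
    simp [tailProb_zero hw1, idealTail_zero, this]
  | n + 1, 1, h => by
    have := errBound_nonneg (fun n => epsErr_nonneg hw hρ0 n) (n + 1)
    rw [tailProb_one hw1 h, idealTail_one]
    simp [this]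
  | n + 1, c + 2, h => by
    have hn : n % 2 = (c + 1) % 2 := by omega
    have hp2 : (2 : ℝ) ≤ p := by exact_mod_cast (Fact.out : p.Prime).two_le
    set x : ℝ := (p : ℝ)⁻¹ with hxdef
    have hx0 : 0 < x := inv_pos.2 (by linarith)
    have hx2 : x ≤ 1 / 2 := by
      rw [hxdef, one_div]; exact inv_anti₀ (by norm_num) hp2
    have hεn := epsErr_nonneg hw hρ0 n
    have hbn := errBound_nonneg (fun n => epsErr_nonneg hw hρ0 n) n
    set ε := epsErr w ρ with hε
    have hstep := abs_tailProb_succ_sub_le hw hw1 hρ0 hρ hn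
    rw [← hxdef] at hstep
    have ih1 := abs_tailProb_sub_ideal_le hw hw1 hρ0 hρ n (c + 1) hn
    have ih3 := abs_tailProb_sub_ideal_le hw hw1 hρ0 hρ n (c + 3) (by omega)
    rw [← hxdef, ← hε] at ih1 ih3
    have hI : idealTail x (n + 1) (c + 2) =
      (1 - x ^ (c + 1)) * idealTail x n (c + 3) + x ^ (c + 1) * idealTail x n (c + 1) := rfl
    have hxc : 0 < x ^ (c + 1) := by positivity
    have hxc2 : x ^ (c + 1) ≤ (1 / 2) ^ (c + 1) := pow_le_pow_left₀ hx0.le hx2 _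
    have hq1 : ((1 : ℝ) / 2) ^ (c + 1) ≤ (1 / 2) ^ 1 :=
      pow_le_pow_of_le_one (by norm_num) (by norm_num) (by omega)
    have hxc1 : x ^ (c + 1) ≤ 1 / 2 := by linarith
    set d1 := tailProb w n (c + 1) - idealTail x n (c + 1) with hd1
    set d3 := tailProb w n (c + 3) - idealTail x n (c + 3) with hd3
    have hmain : |tailProb w (n + 1) (c + 2) - idealTail x (n + 1) (c + 2)| ≤
        x ^ (c + 1) * ε n + ((1 - x ^ (c + 1)) * |d3| + x ^ (c + 1) * |d1|) := by
      have e : tailProb w (n + 1) (c + 2) - idealTail x (n + 1) (c + 2) =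
          (tailProb w (n + 1) (c + 1 + 1) - ((1 - x ^ (c + 1)) * tailProb w n (c + 1 + 2) +
            x ^ (c + 1) * tailProb w n (c + 1))) +
          ((1 - x ^ (c + 1)) * d3 + x ^ (c + 1) * d1) := by
        rw [hI, hd1, hd3]; ring
      rw [e]
      refine (abs_add_le _ _).trans (add_le_add hstep ((abs_add_le _ _).trans (le_of_eq ?_)))
      rw [abs_mul, abs_mul, abs_of_pos hxc, abs_of_nonneg (by linarith : 0 ≤ 1 - x ^ (c + 1))]
    have hgoal : errBound ε (n + 1) * (1 / 2) ^ (c + 2) =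
        7 / 8 * errBound ε n * (1 / 2) ^ (c + 2) + (1 / 2) ^ (c + 1) * ε n := by
      simp only [errBound, pow_succ]; ring
    rw [hgoal]
    have herr : x ^ (c + 1) * ε n ≤ (1 / 2) ^ (c + 1) * ε n :=
      mul_le_mul_of_nonneg_right hxc2 hεn
    refine hmain.trans ?_
    set b := errBound ε n
    set h2 : ℝ := (1 / 2) ^ (c + 2) with hh2
    have hh2pos : 0 < h2 := by positivity
    have e3 : ((1 : ℝ) / 2) ^ (c + 3) = h2 / 2 := by rw [hh2, pow_succ]; ring
    have e1 : ((1 : ℝ) / 2) ^ (c + 1) = 2 * h2 := by rw [hh2, pow_succ _ (c + 1)]; ring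
    rw [e3] at ih3
    have hb2 : 0 ≤ b * h2 := by positivity
    suffices (1 - x ^ (c + 1)) * |d3| + x ^ (c + 1) * |d1| ≤ 7 / 8 * b * h2 by linarith
    rcases Nat.eq_zero_or_pos c with hc | hc
    -- for `c = 0` the size `n` is odd, so both tails at `1` equal `1`
    · have hd10 : d1 = 0 := by
        subst hc
        obtain ⟨n, rfl⟩ : ∃ n', n = n' + 1 := ⟨n - 1, by omega⟩
        rw [hd1, zero_add, tailProb_one hw1 (by omega), idealTail_one, sub_self]
      rw [hd10, abs_zero, mul_zero, add_zero]
      have : (1 - x ^ (c + 1)) * |d3| ≤ 1 * |d3| :=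
        mul_le_mul_of_nonneg_right (by linarith) (abs_nonneg _)
      linarith
    · have hq2 : ((1 : ℝ) / 2) ^ (c + 1) ≤ (1 / 2) ^ 2 :=
        pow_le_pow_of_le_one (by norm_num) (by norm_num) (by omega)
      have hxc4 : x ^ (c + 1) ≤ 1 / 4 := by linarith
      rw [e1] at ih1
      have k3 := mul_le_mul_of_nonneg_left ih3 (by linarith : 0 ≤ 1 - x ^ (c + 1))
      have k1 := mul_le_mul_of_nonneg_left ih1 hxc.le
      have k4 := mul_le_mul_of_nonneg_right hxc4 hb2
      nlinarith

/-- The corank distribution has the same limit as that of the ideal chain. -/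
theorem tendsto_prob_corank (hw : ∀ a, 0 ≤ w a) (hw1 : ∑ a, w a = 1) (hlt : ∀ a, w a < 1)
    (c : ℕ) {L : ℝ} (hL : Tendsto (fun m => idealMass (p : ℝ)⁻¹ m c) atTop (nhds L)) :
    Tendsto (fun m : ℕ => Ex w (fun y : Fin (c + 2 * m) × Fin (c + 2 * m) → ZMod p =>
      ind (corank (skewOf (c + 2 * m) y) = c))) atTop (nhds L) := by
  obtain ⟨ρ, hρ0, hρ1, hρ⟩ := exists_entryChar_bound hw hw1 hlt
  have hp1 : (1 : ℝ) < p := by exact_mod_cast (Fact.out : p.Prime).one_lt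
  have hx0 : 0 < (p : ℝ)⁻¹ := inv_pos.2 (by linarith)
  have hx1 : (p : ℝ)⁻¹ < 1 := inv_lt_one_of_one_lt₀ hp1
  have hb := tendsto_errBound (fun n => epsErr_nonneg hw hρ0 n) (tendsto_epsErr hw hw1 hρ0 hρ1 hρ)
  have hn : Tendsto (fun m : ℕ => c + 2 * m) atTop atTop :=
    tendsto_atTop_mono (fun m => by change m ≤ _; omega) tendsto_id
  have hclose : ∀ c', c % 2 = c' % 2 → Tendsto (fun m : ℕ =>
      tailProb w (c + 2 * m) c' - idealTail (p : ℝ)⁻¹ (c + 2 * m) c') atTop (nhds 0) := by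
    intro c' hc'
    have h0 := (hb.comp hn).mul_const ((1 / 2 : ℝ) ^ c')
    rw [zero_mul] at h0
    refine squeeze_zero_norm (fun m => ?_) h0
    exact abs_tailProb_sub_ideal_le hw hw1 hρ0 hρ (c + 2 * m) c' (by omega)
  have h := ((hclose c rfl).sub (hclose (c + 2) (by omega))).add hL
  rw [sub_zero, zero_add] at h
  refine h.congr fun m => ?_
  rw [prob_corank_eq (by omega), ← idealTail_sub hx0 hx1 (c + 2 * m) m c rfl]
  ring

end Compare

/-! ### From the measure on integer matrices to residues -/

section Final

/-- The mass that `μ` gives to the residue class `a` modulo `p`. -/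
def resWeight (μ : Measure ℤ) (p : ℕ) (a : ZMod p) : ℝ := (μ {x : ℤ | (x : ZMod p) = a}).toReal

/-- An event depending only on residues has the probability computed from the residue weights. -/
theorem pi_toReal_eq_Ex {ι : Type*} [Fintype ι] [DecidableEq ι] {p : ℕ} [Fact p.Prime]
    (μ : Measure ℤ) [IsProbabilityMeasure μ] (P : (ι → ZMod p) → Prop) :
    ((Measure.pi fun _ : ι => μ) {x | P fun i => ((x i : ℤ) : ZMod p)}).toReal =
      Ex (resWeight μ p) fun y => ind (P y) := by
  classical
  have hset : {x : ι → ℤ | P fun i => ((x i : ℤ) : ZMod p)} =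
      ⋃ y ∈ Finset.univ.filter (fun y : ι → ZMod p => P y),
        Set.pi Set.univ fun i => {z : ℤ | (z : ZMod p) = y i} := by
    ext x
    simp only [Set.mem_ofPred_eq, Set.mem_iUnion, Finset.mem_filter, Finset.mem_univ, true_and,
      Set.mem_pi, Set.mem_univ, true_implies, exists_prop]
    constructor
    · exact fun h => ⟨_, h, fun _ => rfl⟩
    · rintro ⟨y, hy, h⟩
      rwa [funext h]
  rw [hset, measure_biUnion_finset, ENNReal.toReal_sum (fun y _ => measure_ne_top _ _)]
  · rw [Ex, Finset.sum_filter]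
    refine Finset.sum_congr rfl fun y _ => ?_
    split_ifs with h
    · rw [ind_true h, mul_one, Measure.pi_pi, ENNReal.toReal_prod]
      rfl
    · rw [ind_false h, mul_zero]
  · intro y _ y' _ hne
    refine Set.disjoint_left.2 fun x hx hx' => hne (funext fun i => ?_)
    exact (hx i trivial).symm.trans (hx' i trivial)
  · exact fun y _ => MeasurableSet.univ_pi fun i => MeasurableSet.of_discrete

theorem sum_resWeight {p : ℕ} [Fact p.Prime] (μ : Measure ℤ) [IsProbabilityMeasure μ] :
    ∑ a, resWeight μ p a = 1 := by
  unfold resWeight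
  rw [← ENNReal.toReal_sum (fun y _ => measure_ne_top _ _),
    ← measure_biUnion_finset (fun a _ b _ hab => Set.disjoint_left.2 fun x hx hx' =>
      hab (hx.symm.trans hx')) (fun a _ => MeasurableSet.of_discrete)]
  have : (⋃ a ∈ (Finset.univ : Finset (ZMod p)), {x : ℤ | (x : ZMod p) = a}) = Set.univ := by
    ext x; simp
  rw [this, measure_univ, ENNReal.toReal_one]

theorem resWeight_lt_one {α : ℝ} (hα : 0 < α) {μ : Measure ℤ} (hbal : IsBalanced α μ) {p : ℕ}
    (hp : p.Prime) (a : ZMod p) : resWeight μ p a < 1 := by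
  have h := ENNReal.toReal_mono ENNReal.ofReal_ne_top (hbal p hp a)
  rw [ENNReal.toReal_ofReal'] at h
  exact h.trans_lt (max_lt (by linarith) one_pos)

theorem skewMatrix_map {p : ℕ} [Fact p.Prime] (n : ℕ) (x : Fin n × Fin n → ℤ) :
    (skewMatrix n x).map (fun z : ℤ => (z : ZMod p)) =
      skewOf n fun i => ((x i : ℤ) : ZMod p) := by
  ext i j
  simp only [skewMatrix, skewOf, Matrix.map_apply, Matrix.of_apply]
  split_ifs <;> simp

theorem matMeasure_rank_eq {p : ℕ} [Fact p.Prime] (μ : Measure ℤ) (hμ : IsProbabilityMeasure μ)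
    {n k c : ℕ} (h : k + c = n) :
    ((matMeasure μ hμ n)
      {x | ((skewMatrix n x).map (fun z : ℤ => (z : ZMod p))).rank = k}).toReal =
    Ex (resWeight μ p) fun y : Fin n × Fin n → ZMod p => ind (corank (skewOf n y) = c) := by
  rw [matMeasure, ← pi_toReal_eq_Ex μ fun y => corank (skewOf n y) = c]
  congr 3
  ext x
  have := rank_add_corank (skewOf n fun i => ((x i : ℤ) : ZMod p))
  rw [skewMatrix_map]
  omega

theorem evenPoch_eq_Icc (x : ℝ) (r : ℕ) :
    evenPoch x r = ∏ k ∈ Finset.Icc 1 r, (1 - x ^ (2 * k)) := by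
  rw [evenPoch, Finset.range_eq_Ico, Finset.prod_Ico_add' (fun k => 1 - x ^ (2 * k)) 0 r 1]
  rfl

theorem inv_pow_eq_zpow (p : ℝ) {k : ℕ} {z : ℤ} (h : z = -(k : ℤ)) : p⁻¹ ^ k = p ^ z := by
  rw [h, zpow_neg, zpow_natCast, inv_pow]

end Final

theorem skew_rank_mod_p_distribution (α : ℝ) (hα : 0 < α)
    (μ : Measure ℤ) (hμ : IsProbabilityMeasure μ) (hbal : IsBalanced α μ)
    (p : ℕ) (hp : p.Prime) (r : ℕ) :
    Tendsto
      (fun n : ℕ =>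
        ((matMeasure μ hμ (2 * n))
          {x | ((skewMatrix (2 * n) x).map (fun z : ℤ => (z : ZMod p))).rank
              = 2 * n - 2 * r}).toReal)
      atTop
      (nhds ((p : ℝ) ^ (-((r : ℤ) * (2 * (r : ℤ) - 1))) *
        (∏' i : ℕ, (1 - (p : ℝ) ^ (-(2 * ((i : ℤ) + (r : ℤ)) + 1)))) /
        (∏ k ∈ Finset.Icc 1 r, (1 - (p : ℝ) ^ (-(2 * (k : ℤ))))))) ∧
    Tendsto
      (fun n : ℕ =>
        ((matMeasure μ hμ (2 * n + 1))
          {x | ((skewMatrix (2 * n + 1) x).map (fun z : ℤ => (z : ZMod p))).rank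
              = 2 * n - 2 * r}).toReal)
      atTop
      (nhds ((p : ℝ) ^ (-((r : ℤ) * (2 * (r : ℤ) + 1))) *
        (∏' i : ℕ, (1 - (p : ℝ) ^ (-(2 * ((i : ℤ) + (r : ℤ) + 1) + 1)))) /
        (∏ k ∈ Finset.Icc 1 r, (1 - (p : ℝ) ^ (-(2 * (k : ℤ))))))) := by
  have : Fact p.Prime := ⟨hp⟩
  have hw : ∀ a, 0 ≤ resWeight μ p a := fun a => ENNReal.toReal_nonneg
  have hw1 : ∑ a, resWeight μ p a = 1 := sum_resWeight μ
  have hlt := fun a => resWeight_lt_one hα hbal hp a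
  have hp1 : (1 : ℝ) < p := by exact_mod_cast hp.one_lt
  have hx0 : 0 < (p : ℝ)⁻¹ := inv_pos.2 (by linarith)
  have hx1 : (p : ℝ)⁻¹ < 1 := inv_lt_one_of_one_lt₀ hp1
  have hev : evenPoch (p : ℝ)⁻¹ r = ∏ k ∈ Finset.Icc 1 r, (1 - (p : ℝ) ^ (-(2 * (k : ℤ)))) := by
    rw [evenPoch_eq_Icc]
    exact Finset.prod_congr rfl fun k _ => by
      rw [inv_pow_eq_zpow (z := -(2 * (k : ℤ))) _ (by push_cast; ring)]
  have hch : ∀ c : ℕ, ((c.choose 2 : ℕ) : ℤ) * 2 = c * (c - 1) := by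
    intro c
    induction c with
    | zero => simp
    | succ c ih => rw [choose_two_succ]; push_cast; linear_combination ih
  -- shifting `n` by `r` makes `2 * n - 2 * r` a genuine difference
  constructor
  · rw [← tendsto_add_atTop_iff_nat r]
    have h := tendsto_prob_corank hw hw1 hlt (2 * r) (tendsto_idealMass_even hx0 hx1 r)
    have hc := hch (2 * r)
    push_cast at hc
    rw [hev, inv_pow_eq_zpow (z := -((r : ℤ) * (2 * (r : ℤ) - 1))) _ (by linarith)] at h
    simp_rw [fun j : ℕ => inv_pow_eq_zpow (p : ℝ) (k := 2 * (j + r) + 1)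
      (z := -(2 * ((j : ℤ) + (r : ℤ)) + 1)) (by push_cast; ring)] at h
    refine h.congr fun m => ?_
    rw [show 2 * (m + r) = 2 * r + 2 * m by ring]
    exact (matMeasure_rank_eq μ hμ (by omega)).symm
  · rw [← tendsto_add_atTop_iff_nat r]
    have h := tendsto_prob_corank hw hw1 hlt (2 * r + 1) (tendsto_idealMass_odd hx0 hx1 r)
    have hc := hch (2 * r + 1)
    push_cast at hc
    rw [hev, inv_pow_eq_zpow (z := -((r : ℤ) * (2 * (r : ℤ) + 1))) _ (by linarith)] at h
    simp_rw [fun j : ℕ => inv_pow_eq_zpow (p : ℝ) (k := 2 * (j + (r + 1)) + 1)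
      (z := -(2 * ((j : ℤ) + (r : ℤ) + 1) + 1)) (by push_cast; ring)] at h
    refine h.congr fun m => ?_
    rw [show 2 * (m + r) = 2 * r + 2 * m by ring,
      show 2 * r + 2 * m + 1 = 2 * r + 1 + 2 * m by ring]
    exact (matMeasure_rank_eq μ hμ (by omega)).symm
end
end
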